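/- arXiv:math/0210228 — 2 statements merged into one kernel-verified Lean document; each statement's English description precedes it below -/
import Mathlib

section
/- Let p > 2, let 𝒫 and 𝒬 be families of partition–weight pairs on countable sets A and B respectively, each satisfying the envelope property, let X = X(𝒫), Y = X(𝒬) with natural coordinate bases (x_a)_{a∈A} and (y_b)_{b∈B}, and let S : X → L_p([0,1]) and T : Y → L_p([0,1]) be bounded linear maps that are bounded below. Then there is a constant C' > 0 such that for every partition R of A×B and every choice, for each r ∈ R, of pairs (P_r,(w_{r,a})) ∈ 𝒫 and (Q_r,(w'_{r,b})) ∈ 𝒬 with the property that r ⊆ p_r × q_r for some p_r ∈ P_r and q_r ∈ Q_r, one has, for all scalars (c_{a,b}) with only finitely many nonzero: ‖Σ_{a,b} c_{a,b} (Sx_a ⊗ Ty_b)‖_{L_p([0,1]²)} ≥ C' (Σ_{r∈R} (Σ_{(a,b)∈r} c_{a,b}² (w_{r,a})² (w'_{r,b})²)^{p/2})^{1/p}. -/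
open scoped ENNReal
open MeasureTheory Filter

noncomputable section

variable {α : Type*}

/-- `P` is a partition of the type `α`: a collection of pairwise disjoint
nonempty subsets of `α` whose union is all of `α`. -/
def IsPartition (P : Set (Set α)) : Prop :=
  (∀ N ∈ P, N.Nonempty) ∧ P.PairwiseDisjoint id ∧ ⋃₀ P = Set.univ

/-- A weight function takes values in `(0,1]`. -/
def IsWeight (W : α → ℝ) : Prop := ∀ a, W a ∈ Set.Ioc (0 : ℝ) 1

/-- `‖x‖_{P,W} = (Σ_{N∈P} (Σ_{j∈N} x_j² w_j²)^{p/2})^{1/p}`, valued in `[0,∞]`. -/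
def pwNorm (p : ℝ) (P : Set (Set α)) (W : α → ℝ) (x : α → ℝ) : ℝ≥0∞ :=
  (∑' N : P, (∑' j : N.1, ENNReal.ofReal ((x j.1) ^ 2 * (W j.1) ^ 2)) ^ (p / 2)) ^ (1 / p)

/-- A partition–weight pair on `α`. -/
abbrev PWPair (α : Type*) := Set (Set α) × (α → ℝ)

/-- Every member of the family is a genuine partition–weight pair. -/
def IsPWFamily (𝒞 : Set (PWPair α)) : Prop :=
  ∀ PW ∈ 𝒞, IsPartition PW.1 ∧ IsWeight PW.2

/-- `‖x‖_𝒞 = sup_{(P,W) ∈ 𝒞} ‖x‖_{P,W}`. -/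
def famNorm (p : ℝ) (𝒞 : Set (PWPair α)) (x : α → ℝ) : ℝ≥0∞ :=
  ⨆ PW ∈ 𝒞, pwNorm p PW.1 PW.2 x

/-- The block of the partition `Q` containing `b` (for a genuine partition this is
the unique element of `Q` containing `b`). -/
def blockOf (Q : Set (Set α)) (b : α) : Set α := ⋃₀ {q ∈ Q | b ∈ q}

/-- The partition `P(Q,T)` obtained from a partition `Q` and a choice `T` of a
partition–weight pair for each block of `Q`. -/
def envPartition (Q : Set (Set α)) (T : Set α → PWPair α) : Set (Set α) :=
  {K | K.Nonempty ∧ ∃ q ∈ Q, ∃ s ∈ (T q).1, K = q ∩ s}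

/-- The weight `W(Q,T)`: on the block `q` of `Q` it is the weight chosen by `T q`. -/
def envWeight (Q : Set (Set α)) (T : Set α → PWPair α) : α → ℝ :=
  fun b => (T (blockOf Q b)).2 b

/-- A family of partition–weight pairs satisfies the envelope property if it is
closed under the operation `(Q, T) ↦ (P(Q,T), W(Q,T))`. -/
def EnvelopeProp (𝒞 : Set (PWPair α)) : Prop :=
  ∀ Q : Set (Set α), IsPartition Q → ∀ T : Set α → PWPair α, (∀ q ∈ Q, T q ∈ 𝒞) →
    (envPartition Q T, envWeight Q T) ∈ 𝒞

/-- The family `𝒞̃` of all pairs `(P(Q,T), W(Q,T))`. -/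
def envFam (𝒞 : Set (PWPair α)) : Set (PWPair α) :=
  {PW | ∃ Q T, IsPartition Q ∧ (∀ q ∈ Q, T q ∈ 𝒞) ∧
    PW = (envPartition Q T, envWeight Q T)}

/-- The envelope norm generated by `𝒞`. -/
def envNorm (p : ℝ) (𝒞 : Set (PWPair α)) (x : α → ℝ) : ℝ≥0∞ := famNorm p (envFam 𝒞) x

/-- The coordinate basis vector `e_a` of a sequence space on `α`. -/
def coordVec (a : α) : α → ℝ := Set.indicator {a} 1

/-- The sign attached to a Boolean. -/
def boolSign (b : Bool) : ℝ := if b then 1 else -1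

lemma boolSign_sq (b : Bool) : boolSign b ^ 2 = 1 := by
  cases b <;> simp [boolSign]

lemma boolSign_not (b : Bool) : boolSign (!b) = -boolSign b := by
  cases b <;> simp [boolSign]

section Rademacher

variable {ι κ : Type*} [Fintype ι] [Fintype κ]

open Classical in
lemma sum_boolSign_mul_of_ne {i j : ι} (hij : i ≠ j) :
    ∑ ε : ι → Bool, boolSign (ε i) * boolSign (ε j) = 0 := by
  have hinv : Function.Involutive (fun ε : ι → Bool => Function.update ε i (!ε i)) := by
    intro ε
    simp
  have h := Equiv.sum_comp (hinv.toPerm _) (fun ε : ι → Bool => boolSign (ε i) * boolSign (ε j))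
  have h' : ∀ ε : ι → Bool, boolSign (hinv.toPerm _ ε i) * boolSign (hinv.toPerm _ ε j) =
      -(boolSign (ε i) * boolSign (ε j)) := by
    intro ε
    simp [Function.Involutive.coe_toPerm, Function.update_of_ne hij.symm, boolSign_not]
  simp only [h', Finset.sum_neg_distrib] at h
  linarith

open Classical in
/-- Second moments of Rademacher sums. -/
lemma sum_sq_rademacher (u : ι → ℝ) :
    ∑ ε : ι → Bool, (∑ i, boolSign (ε i) * u i) ^ 2 =
      (Fintype.card (ι → Bool) : ℝ) * ∑ i, u i ^ 2 := by
  have expand : ∀ ε : ι → Bool, (∑ i, boolSign (ε i) * u i) ^ 2 =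
      ∑ i, ∑ j, (boolSign (ε i) * boolSign (ε j)) * (u i * u j) := by
    intro ε
    rw [sq, Finset.sum_mul_sum]
    exact Finset.sum_congr rfl fun i _ => Finset.sum_congr rfl fun j _ => by ring
  simp only [expand]
  rw [Finset.sum_comm, Finset.mul_sum]
  refine Finset.sum_congr rfl fun i _ => ?_
  rw [Finset.sum_comm]
  simp only [← Finset.sum_mul]
  rw [Finset.sum_eq_single i]
  · simp [← sq, boolSign_sq]
  · intro j _ hj
    rw [sum_boolSign_mul_of_ne hj.symm, zero_mul]
  · simp

open Classical in
/-- Second moments of bilinear Rademacher sums. -/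
lemma sum_sq_rademacher_bilinear (u : ι → κ → ℝ) :
    ∑ η : (ι → Bool) × (κ → Bool),
        (∑ i, ∑ j, boolSign (η.1 i) * boolSign (η.2 j) * u i j) ^ 2 =
      (Fintype.card ((ι → Bool) × (κ → Bool)) : ℝ) * ∑ i, ∑ j, u i j ^ 2 := by
  rw [Fintype.sum_prod_type_right, Fintype.card_prod]
  have inner_eq : ∀ δ : κ → Bool, ∑ ε : ι → Bool,
      (∑ i, ∑ j, boolSign (ε i) * boolSign (δ j) * u i j) ^ 2 =
        (Fintype.card (ι → Bool) : ℝ) * ∑ i, (∑ j, boolSign (δ j) * u i j) ^ 2 := by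
    intro δ
    rw [← sum_sq_rademacher]
    simp only [Finset.mul_sum, mul_assoc]
  simp only [inner_eq]
  rw [← Finset.mul_sum, Finset.sum_comm]
  simp only [sum_sq_rademacher]
  rw [← Finset.mul_sum]
  push_cast
  ring

/-- Jensen's inequality for the normalised counting measure, between second and `p`-th moments. -/
lemma card_mul_rpow_le_sum_rpow_of_sum_sq {Λ : Type*} [Fintype Λ] [Nonempty Λ] {p : ℝ}
    (hp : 2 ≤ p) (X : Λ → ℝ) (V : ℝ) (h : ∑ k, X k ^ 2 = (Fintype.card Λ : ℝ) * V) :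
    (Fintype.card Λ : ℝ) * V ^ (p / 2) ≤ ∑ k, |X k| ^ p := by
  have hN : (0 : ℝ) < Fintype.card Λ := by exact_mod_cast Fintype.card_pos
  have hJ := Real.rpow_arith_mean_le_arith_mean_rpow Finset.univ
    (fun _ : Λ => (Fintype.card Λ : ℝ)⁻¹) (fun k => X k ^ 2) (fun _ _ => by positivity)
    (by simp) (fun _ _ => by positivity) (p := p / 2) (by linarith)
  have hpow : ∀ k, (X k ^ 2) ^ (p / 2) = |X k| ^ p := by
    intro k
    rw [← sq_abs, ← Real.rpow_natCast, ← Real.rpow_mul (abs_nonneg _)]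
    congr 1
    push_cast
    ring
  simp only [hpow] at hJ
  rw [← Finset.mul_sum, ← Finset.mul_sum, h, inv_mul_cancel_left₀ hN.ne'] at hJ
  calc (Fintype.card Λ : ℝ) * V ^ (p / 2)
      ≤ (Fintype.card Λ : ℝ) * ((Fintype.card Λ : ℝ)⁻¹ * ∑ k, |X k| ^ p) := by gcongr
    _ = ∑ k, |X k| ^ p := mul_inv_cancel_left₀ hN.ne' _

/-- A constant for the upper Khintchine inequality. -/
def khintchineConst (p : ℝ) : ℝ := 2 * p ^ p * Real.exp (1 / 2)

lemma khintchineConst_pos {p : ℝ} (hp : 0 < p) : 0 < khintchineConst p := by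
  unfold khintchineConst
  positivity

lemma abs_rpow_le_exp_add_exp_neg {p : ℝ} (hp : 0 < p) (x : ℝ) :
    |x| ^ p ≤ p ^ p * (Real.exp x + Real.exp (-x)) := by
  have h1 : |x| ≤ p * Real.exp (|x| / p) := by
    have := Real.add_one_le_exp (|x| / p)
    calc |x| = p * (|x| / p) := by field_simp
      _ ≤ p * Real.exp (|x| / p) := by gcongr; linarith
  have h2 : Real.exp |x| ≤ Real.exp x + Real.exp (-x) := by
    rcases abs_choice x with h | h <;> rw [h] <;> linarith [Real.exp_pos x, Real.exp_pos (-x)]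
  calc |x| ^ p ≤ (p * Real.exp (|x| / p)) ^ p := by gcongr
    _ = p ^ p * Real.exp |x| := by
      rw [Real.mul_rpow hp.le (Real.exp_pos _).le, ← Real.exp_mul]
      congr 2
      field_simp
    _ ≤ _ := by gcongr

open Classical in
lemma sum_exp_rademacher_le (u : ι → ℝ) :
    ∑ ε : ι → Bool, Real.exp (∑ i, boolSign (ε i) * u i) ≤
      (Fintype.card (ι → Bool) : ℝ) * Real.exp ((∑ i, u i ^ 2) / 2) := by
  simp only [Real.exp_sum]
  rw [← Fintype.prod_sum (fun i (b : Bool) => Real.exp (boolSign b * u i))]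
  have hcosh : ∀ i, ∑ b : Bool, Real.exp (boolSign b * u i) = 2 * Real.cosh (u i) := by
    intro i
    rw [Real.cosh_eq]
    simp [boolSign]
    ring
  simp only [hcosh]
  rw [Finset.prod_mul_distrib, Finset.sum_div, Real.exp_sum]
  have hcard : ∏ _i : ι, (2 : ℝ) = Fintype.card (ι → Bool) := by simp
  rw [hcard]
  gcongr with i
  exact Real.cosh_le_exp_half_sq _

open Classical in
/-- The upper Khintchine inequality. -/
lemma sum_abs_rademacher_rpow_le {p : ℝ} (hp : 0 < p) (u : ι → ℝ) :
    ∑ ε : ι → Bool, |∑ i, boolSign (ε i) * u i| ^ p ≤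
      (Fintype.card (ι → Bool) : ℝ) * (khintchineConst p * (∑ i, u i ^ 2) ^ (p / 2)) := by
  have normalised : ∀ v : ι → ℝ, ∑ i, v i ^ 2 = 1 →
      ∑ ε : ι → Bool, |∑ i, boolSign (ε i) * v i| ^ p ≤
        (Fintype.card (ι → Bool) : ℝ) * khintchineConst p := by
    intro v hv
    have hpos := sum_exp_rademacher_le v
    have hneg := sum_exp_rademacher_le (-v)
    simp only [Pi.neg_apply, mul_neg, Finset.sum_neg_distrib, neg_sq, hv] at hpos hneg
    calc ∑ ε : ι → Bool, |∑ i, boolSign (ε i) * v i| ^ p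
        ≤ ∑ ε : ι → Bool, p ^ p * (Real.exp (∑ i, boolSign (ε i) * v i) +
            Real.exp (-∑ i, boolSign (ε i) * v i)) :=
          Finset.sum_le_sum fun ε _ => abs_rpow_le_exp_add_exp_neg hp _
      _ = p ^ p * (∑ ε : ι → Bool, Real.exp (∑ i, boolSign (ε i) * v i) +
            ∑ ε : ι → Bool, Real.exp (-∑ i, boolSign (ε i) * v i)) := by
          rw [← Finset.mul_sum, Finset.sum_add_distrib]
      _ ≤ p ^ p * ((Fintype.card (ι → Bool) : ℝ) * Real.exp (1 / 2) +
            (Fintype.card (ι → Bool) : ℝ) * Real.exp (1 / 2)) := by gcongr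
      _ = _ := by unfold khintchineConst; ring
  set V := ∑ i, u i ^ 2 with hV
  have hV0 : 0 ≤ V := by positivity
  rcases hV0.eq_or_lt with h0 | h0
  · have hu : ∀ i, u i = 0 := by
      intro i
      have := (Finset.sum_eq_zero_iff_of_nonneg (fun i _ => sq_nonneg (u i))).1 h0.symm i
        (Finset.mem_univ i)
      simpa using this
    simp [hu, ← h0, Real.zero_rpow hp.ne', Real.zero_rpow (half_pos hp).ne']
  · have hs : 0 < √V := Real.sqrt_pos.2 h0
    have h1 := normalised (fun i => u i / √V) (by
      simp only [div_pow, Real.sq_sqrt hV0]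
      rw [← Finset.sum_div, ← hV, div_self h0.ne'])
    have h2 : ∀ ε : ι → Bool, |∑ i, boolSign (ε i) * u i| ^ p =
        V ^ (p / 2) * |∑ i, boolSign (ε i) * (u i / √V)| ^ p := by
      intro ε
      have h3 : ∑ i, boolSign (ε i) * u i = √V * ∑ i, boolSign (ε i) * (u i / √V) := by
        rw [Finset.mul_sum]
        refine Finset.sum_congr rfl fun i _ => ?_
        field_simp
      rw [h3, abs_mul, abs_of_pos hs, Real.mul_rpow hs.le (abs_nonneg _), Real.sqrt_eq_rpow,
        ← Real.rpow_mul hV0]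
      congr 2
      ring
    simp only [h2]
    rw [← Finset.mul_sum]
    calc _ ≤ V ^ (p / 2) * ((Fintype.card (ι → Bool) : ℝ) * khintchineConst p) := by gcongr
      _ = _ := by ring

end Rademacher

section SquareFunction

variable {ι κ Ω Ω' : Type*} [Fintype ι] [Fintype κ] [MeasurableSpace Ω] [MeasurableSpace Ω']
  {μ : Measure Ω} {ν : Measure Ω'} {f : ι → Ω → ℝ} {g : κ → Ω' → ℝ} {p : ℝ}

lemma enorm_rpow_eq_ofReal (hp : 0 ≤ p) (x : ℝ) : ‖x‖ₑ ^ p = ENNReal.ofReal (|x| ^ p) := by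
  rw [Real.enorm_eq_ofReal_abs, ENNReal.ofReal_rpow_of_nonneg (abs_nonneg _) hp]

open Classical in
/-- A lower estimate for all sums `∑ dᵢ fᵢ` which depends only on `|dᵢ|` passes to the
square function. -/
lemma le_lintegral_square_function (hp : 2 < p) (hf : ∀ i, Measurable (f i)) {c : ℝ≥0∞}
    {w : ι → ℝ}
    (hL : ∀ d : ι → ℝ, c * ENNReal.ofReal (∑ i, d i ^ 2 * w i ^ 2) ^ (p / 2) ≤
      ∫⁻ s, ‖∑ i, d i * f i s‖ₑ ^ p ∂μ)
    {D : ι → ℝ} (hD : ∀ i, 0 ≤ D i) :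
    c * ENNReal.ofReal (∑ i, D i * w i ^ 2) ^ (p / 2) ≤
      ENNReal.ofReal (khintchineConst p) *
        ∫⁻ s, ENNReal.ofReal (∑ i, D i * f i s ^ 2) ^ (p / 2) ∂μ := by
  have hp0 : 0 < p := by linarith
  set N : ℝ≥0∞ := (Fintype.card (ι → Bool) : ℝ≥0∞) with hN
  have hN0 : N ≠ 0 := by simp [hN]
  have hNtop : N ≠ ⊤ := ENNReal.natCast_ne_top _
  rw [← ENNReal.mul_le_mul_iff_right hN0 hNtop]
  have each : ∀ ε : ι → Bool, c * ENNReal.ofReal (∑ i, D i * w i ^ 2) ^ (p / 2) ≤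
      ∫⁻ s, ‖∑ i, boolSign (ε i) * (√(D i) * f i s)‖ₑ ^ p ∂μ := by
    intro ε
    have h := hL fun i => boolSign (ε i) * √(D i)
    simpa only [mul_pow, boolSign_sq, one_mul, Real.sq_sqrt (hD _), mul_assoc] using h
  calc N * (c * ENNReal.ofReal (∑ i, D i * w i ^ 2) ^ (p / 2))
      = ∑ _ε : ι → Bool, c * ENNReal.ofReal (∑ i, D i * w i ^ 2) ^ (p / 2) := by
        rw [Finset.sum_const, nsmul_eq_mul, Finset.card_univ]
    _ ≤ ∑ ε : ι → Bool, ∫⁻ s, ‖∑ i, boolSign (ε i) * (√(D i) * f i s)‖ₑ ^ p ∂μ :=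
        Finset.sum_le_sum fun ε _ => each ε
    _ = ∫⁻ s, ∑ ε : ι → Bool, ‖∑ i, boolSign (ε i) * (√(D i) * f i s)‖ₑ ^ p ∂μ := by
        rw [lintegral_finsetSum]
        intro ε _
        fun_prop
    _ ≤ ∫⁻ s, N * (ENNReal.ofReal (khintchineConst p) *
          ENNReal.ofReal (∑ i, D i * f i s ^ 2) ^ (p / 2)) ∂μ := by
        refine lintegral_mono fun s => ?_
        have h := sum_abs_rademacher_rpow_le hp0 fun i => √(D i) * f i s
        simp only [mul_pow, Real.sq_sqrt (hD _)] at h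
        have hV : 0 ≤ ∑ i, D i * f i s ^ 2 :=
          Finset.sum_nonneg fun i _ => mul_nonneg (hD i) (sq_nonneg _)
        simp only [enorm_rpow_eq_ofReal hp0.le]
        rw [← ENNReal.ofReal_sum_of_nonneg (fun _ _ => by positivity),
          ENNReal.ofReal_rpow_of_nonneg hV (by positivity),
          ← ENNReal.ofReal_mul (khintchineConst_pos hp0).le, hN, ← ENNReal.ofReal_natCast,
          ← ENNReal.ofReal_mul (by positivity)]
        exact ENNReal.ofReal_le_ofReal h
    _ = _ := by
        rw [lintegral_const_mul' _ _ hNtop, lintegral_const_mul' _ _ ENNReal.ofReal_ne_top]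

/-- Iteration of lower square function estimates in the two variables of a tensor product. -/
lemma le_lintegral_prod_square_function [SFinite μ] [SFinite ν] (hp : 2 < p)
    (hf : ∀ i, Measurable (f i)) (hg : ∀ j, Measurable (g j)) {c c' : ℝ≥0∞}
    (hc : c ≠ ⊤) {w : ι → ℝ} {w' : κ → ℝ}
    (hL : ∀ d : ι → ℝ, c * ENNReal.ofReal (∑ i, d i ^ 2 * w i ^ 2) ^ (p / 2) ≤
      ∫⁻ s, ‖∑ i, d i * f i s‖ₑ ^ p ∂μ)
    (hL' : ∀ d : κ → ℝ, c' * ENNReal.ofReal (∑ j, d j ^ 2 * w' j ^ 2) ^ (p / 2) ≤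
      ∫⁻ t, ‖∑ j, d j * g j t‖ₑ ^ p ∂ν)
    {m : ι → κ → ℝ} (hm : ∀ i j, 0 ≤ m i j) :
    c * c' * ENNReal.ofReal (∑ i, ∑ j, m i j * w i ^ 2 * w' j ^ 2) ^ (p / 2) ≤
      ENNReal.ofReal (khintchineConst p) ^ 2 *
        ∫⁻ z, ENNReal.ofReal (∑ i, ∑ j, m i j * f i z.1 ^ 2 * g j z.2 ^ 2) ^ (p / 2)
          ∂(μ.prod ν) := by
  set k := ENNReal.ofReal (khintchineConst p)
  have hk : k ≠ ⊤ := ENNReal.ofReal_ne_top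
  have inner_le : ∀ t, c * ENNReal.ofReal (∑ j, (∑ i, m i j * w i ^ 2) * g j t ^ 2) ^ (p / 2) ≤
      k * ∫⁻ s, ENNReal.ofReal (∑ i, ∑ j, m i j * f i s ^ 2 * g j t ^ 2) ^ (p / 2) ∂μ := by
    intro t
    have h := le_lintegral_square_function hp hf hL (D := fun i => ∑ j, m i j * g j t ^ 2)
      fun i => Finset.sum_nonneg fun j _ => mul_nonneg (hm i j) (sq_nonneg _)
    convert h using 6
    · simp only [Finset.sum_mul]
      rw [Finset.sum_comm]
      exact Finset.sum_congr rfl fun i _ => Finset.sum_congr rfl fun j _ => by ring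
    · simp only [Finset.sum_mul]
      exact Finset.sum_congr rfl fun i _ => Finset.sum_congr rfl fun j _ => by ring
  have outer_le := le_lintegral_square_function hp hg hL' (D := fun j => ∑ i, m i j * w i ^ 2)
    fun j => Finset.sum_nonneg fun i _ => mul_nonneg (hm i j) (sq_nonneg _)
  have hswap : ∑ i, ∑ j, m i j * w i ^ 2 * w' j ^ 2 = ∑ j, (∑ i, m i j * w i ^ 2) * w' j ^ 2 := by
    simp only [Finset.sum_mul]
    rw [Finset.sum_comm]
  rw [lintegral_prod_symm _ (by fun_prop), hswap]
  calc c * c' * ENNReal.ofReal (∑ j, (∑ i, m i j * w i ^ 2) * w' j ^ 2) ^ (p / 2)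
      ≤ c * (k * ∫⁻ t, ENNReal.ofReal (∑ j, (∑ i, m i j * w i ^ 2) * g j t ^ 2) ^ (p / 2) ∂ν) := by
        rw [mul_assoc]
        gcongr
    _ = k * ∫⁻ t, c * ENNReal.ofReal (∑ j, (∑ i, m i j * w i ^ 2) * g j t ^ 2) ^ (p / 2) ∂ν := by
        rw [lintegral_const_mul' _ _ hc]
        ring
    _ ≤ k * ∫⁻ t, k * ∫⁻ s, ENNReal.ofReal
          (∑ i, ∑ j, m i j * f i s ^ 2 * g j t ^ 2) ^ (p / 2) ∂μ ∂ν := by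
        exact mul_le_mul_right (lintegral_mono inner_le) k
    _ = _ := by
        rw [lintegral_const_mul' _ _ hk]
        ring

open Classical in
/-- If `(fᵢ)` and `(gⱼ)` are unconditional in `L_p`, then the `L_p`-norm of
`∑ uᵢⱼ fᵢ ⊗ gⱼ` dominates the `L_p`-norm of its square function. -/
lemma lintegral_prod_square_function_le [SFinite μ] [SFinite ν] (hp : 2 < p)
    (hf : ∀ i, Measurable (f i)) (hg : ∀ j, Measurable (g j)) {K K' : ℝ≥0∞}
    (hK : K ≠ ⊤) (hK' : K' ≠ ⊤)
    (hU : ∀ (ε : ι → Bool) (d : ι → ℝ), ∫⁻ s, ‖∑ i, boolSign (ε i) * d i * f i s‖ₑ ^ p ∂μ ≤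
      K * ∫⁻ s, ‖∑ i, d i * f i s‖ₑ ^ p ∂μ)
    (hU' : ∀ (δ : κ → Bool) (d : κ → ℝ), ∫⁻ t, ‖∑ j, boolSign (δ j) * d j * g j t‖ₑ ^ p ∂ν ≤
      K' * ∫⁻ t, ‖∑ j, d j * g j t‖ₑ ^ p ∂ν)
    (u : ι → κ → ℝ) :
    ∫⁻ z, ENNReal.ofReal (∑ i, ∑ j, u i j ^ 2 * f i z.1 ^ 2 * g j z.2 ^ 2) ^ (p / 2)
        ∂(μ.prod ν) ≤
      K * K' * ∫⁻ z, ‖∑ i, ∑ j, u i j * f i z.1 * g j z.2‖ₑ ^ p ∂(μ.prod ν) := by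
  have hp0 : 0 < p := by linarith
  set N : ℝ≥0∞ := (Fintype.card ((ι → Bool) × (κ → Bool)) : ℝ≥0∞) with hN
  have hN0 : N ≠ 0 := by simp [hN]
  have hNtop : N ≠ ⊤ := ENNReal.natCast_ne_top _
  set I := ∫⁻ z, ‖∑ i, ∑ j, u i j * f i z.1 * g j z.2‖ₑ ^ p ∂(μ.prod ν) with hI
  have change_left : ∀ (ε : ι → Bool) (v : ι → κ → ℝ),
      ∫⁻ z, ‖∑ i, ∑ j, boolSign (ε i) * v i j * f i z.1 * g j z.2‖ₑ ^ p ∂(μ.prod ν) ≤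
        K * ∫⁻ z, ‖∑ i, ∑ j, v i j * f i z.1 * g j z.2‖ₑ ^ p ∂(μ.prod ν) := by
    intro ε v
    rw [lintegral_prod_symm _ (by fun_prop), lintegral_prod_symm _ (by fun_prop),
      ← lintegral_const_mul' _ _ hK]
    refine lintegral_mono fun t => ?_
    have h := hU ε (fun i => ∑ j, v i j * g j t)
    simp only [Finset.mul_sum, Finset.sum_mul] at h
    simpa only [mul_assoc, mul_comm (f _ _)] using h
  have change_right : ∀ (δ : κ → Bool) (v : ι → κ → ℝ),
      ∫⁻ z, ‖∑ i, ∑ j, boolSign (δ j) * v i j * f i z.1 * g j z.2‖ₑ ^ p ∂(μ.prod ν) ≤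
        K' * ∫⁻ z, ‖∑ i, ∑ j, v i j * f i z.1 * g j z.2‖ₑ ^ p ∂(μ.prod ν) := by
    intro δ v
    rw [lintegral_prod _ (by fun_prop), lintegral_prod _ (by fun_prop),
      ← lintegral_const_mul' _ _ hK']
    refine lintegral_mono fun s => ?_
    have h := hU' δ (fun j => ∑ i, v i j * f i s)
    simp only [Finset.mul_sum, Finset.sum_mul, Finset.sum_comm (s := (Finset.univ : Finset κ))] at h
    simpa only [mul_assoc] using h
  have each : ∀ η : (ι → Bool) × (κ → Bool),
      ∫⁻ z, ‖∑ i, ∑ j, boolSign (η.1 i) * boolSign (η.2 j) * (u i j * f i z.1 * g j z.2)‖ₑ ^ p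
        ∂(μ.prod ν) ≤ K * K' * I := by
    intro η
    have h1 := change_left η.1 fun i j => boolSign (η.2 j) * u i j
    have h2 := change_right η.2 u
    simp only [mul_assoc] at h1 h2 hI ⊢
    exact h1.trans (by rw [hI]; gcongr)
  rw [← ENNReal.mul_le_mul_iff_right hN0 hNtop, ← lintegral_const_mul' _ _ hNtop]
  calc ∫⁻ z, N * ENNReal.ofReal (∑ i, ∑ j, u i j ^ 2 * f i z.1 ^ 2 * g j z.2 ^ 2) ^ (p / 2)
        ∂(μ.prod ν)
      ≤ ∫⁻ z, ∑ η : (ι → Bool) × (κ → Bool),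
          ‖∑ i, ∑ j, boolSign (η.1 i) * boolSign (η.2 j) * (u i j * f i z.1 * g j z.2)‖ₑ ^ p
          ∂(μ.prod ν) := by
        refine lintegral_mono fun z => ?_
        have h := card_mul_rpow_le_sum_rpow_of_sum_sq hp.le _ _
          (sum_sq_rademacher_bilinear fun i j => u i j * f i z.1 * g j z.2)
        simp only [mul_pow] at h
        simp only [enorm_rpow_eq_ofReal hp0.le]
        rw [← ENNReal.ofReal_sum_of_nonneg (fun _ _ => by positivity),
          ENNReal.ofReal_rpow_of_nonneg (by positivity) (by positivity), hN,
          ← ENNReal.ofReal_natCast, ← ENNReal.ofReal_mul (by positivity)]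
        exact ENNReal.ofReal_le_ofReal h
    _ = ∑ η : (ι → Bool) × (κ → Bool), ∫⁻ z,
          ‖∑ i, ∑ j, boolSign (η.1 i) * boolSign (η.2 j) * (u i j * f i z.1 * g j z.2)‖ₑ ^ p
          ∂(μ.prod ν) := by
        rw [lintegral_finsetSum]
        intro η _
        fun_prop
    _ ≤ ∑ _η : (ι → Bool) × (κ → Bool), K * K' * I := Finset.sum_le_sum fun η _ => each η
    _ = N * (K * K' * I) := by
        rw [Finset.sum_const, nsmul_eq_mul, Finset.card_univ]

end SquareFunction

lemma ENNReal.tsum_rpow_le_rpow_tsum {ι : Type*} {q : ℝ} (hq : 1 ≤ q) (g : ι → ℝ≥0∞) :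
    ∑' i, g i ^ q ≤ (∑' i, g i) ^ q := by
  classical
  rw [ENNReal.tsum_eq_iSup_sum]
  refine iSup_le fun s => ?_
  refine le_trans ?_ (ENNReal.rpow_le_rpow (ENNReal.sum_le_tsum s) (by linarith))
  induction s using Finset.induction_on with
  | empty => simp
  | insert a s ha ih =>
    rw [Finset.sum_insert ha, Finset.sum_insert ha]
    exact (add_le_add_right ih _).trans (ENNReal.add_rpow_le_rpow_add _ _ hq)

lemma tsum_tsum_le_tsum_of_pairwiseDisjoint {P : Set (Set α)} (hP : P.PairwiseDisjoint id)
    (h : α → ℝ≥0∞) : ∑' N : P, ∑' j : N.1, h j ≤ ∑' j, h j := by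
  rw [← ENNReal.tsum_sigma' fun x : (N : P) × N.1 => h x.2]
  refine ENNReal.tsum_comp_le_tsum_of_injective (f := fun x : (N : P) × N.1 => (x.2 : α)) ?_ h
  rintro ⟨⟨N, hN⟩, ⟨a, ha⟩⟩ ⟨⟨M, hM⟩, ⟨b, hb⟩⟩ (rfl : a = b)
  obtain rfl : N = M := hP.elim_set hN hM a ha hb
  rfl

section SequenceSpace

variable {p : ℝ} {𝒞 : Set (PWPair α)}

lemma famNorm_congr_sq {x y : α → ℝ} (h : ∀ a, x a ^ 2 = y a ^ 2) :
    famNorm p 𝒞 x = famNorm p 𝒞 y := by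
  simp only [famNorm, pwNorm, h]

lemma famNorm_lt_top_of_finite_support (hp : 2 < p) (h𝒞 : IsPWFamily 𝒞) {x : α → ℝ}
    (hx : x.support.Finite) : famNorm p 𝒞 x < ⊤ := by
  have hsum : ∑' a, ENNReal.ofReal (x a ^ 2) < ⊤ := by
    rw [tsum_eq_sum (s := hx.toFinset) (by simp +contextual)]
    exact ENNReal.sum_lt_top.2 fun _ _ => ENNReal.ofReal_lt_top
  have hbound : famNorm p 𝒞 x ≤ ((∑' a, ENNReal.ofReal (x a ^ 2)) ^ (p / 2)) ^ (1 / p) := by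
    refine iSup₂_le fun PW hPW => ENNReal.rpow_le_rpow ?_ (by positivity)
    obtain ⟨⟨-, hdisj, -⟩, hW⟩ := h𝒞 PW hPW
    refine (ENNReal.tsum_rpow_le_rpow_tsum (by linarith) _).trans
      (ENNReal.rpow_le_rpow ?_ (by positivity))
    refine (tsum_tsum_le_tsum_of_pairwiseDisjoint hdisj
      fun a => ENNReal.ofReal (x a ^ 2 * PW.2 a ^ 2)).trans ?_
    refine ENNReal.tsum_le_tsum fun a => ENNReal.ofReal_le_ofReal ?_
    exact mul_le_of_le_one_right (sq_nonneg _) (pow_le_one₀ (hW a).1.le (hW a).2)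
  exact hbound.trans_lt (ENNReal.rpow_lt_top_of_nonneg (by positivity)
    (ENNReal.rpow_lt_top_of_nonneg (by positivity) hsum.ne).ne)

/-- The vector supported on `F` with coordinates `d`. -/
def finsetVec (F : Finset α) (d : F → ℝ) : α → ℝ := ∑ i, d i • coordVec i.1

lemma finsetVec_apply_coe (F : Finset α) (d : F → ℝ) (i : F) : finsetVec F d i = d i := by
  classical
  simp only [finsetVec, coordVec, Finset.sum_apply, Pi.smul_apply, smul_eq_mul]
  rw [Finset.sum_eq_single i]
  · simp
  · intro j _ hj
    have : (i : α) ≠ j := fun h => hj (Subtype.ext h.symm)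
    simp [this]
  · simp

lemma finsetVec_apply_of_notMem (F : Finset α) (d : F → ℝ) {a : α} (ha : a ∉ F) :
    finsetVec F d a = 0 := by
  classical
  simp only [finsetVec, coordVec, Finset.sum_apply]
  refine Finset.sum_eq_zero fun i _ => ?_
  have : a ≠ i := fun h => ha (h ▸ i.2)
  simp [this]

lemma finite_support_finsetVec (F : Finset α) (d : F → ℝ) : (finsetVec F d).support.Finite :=
  F.finite_toSet.subset fun a ha => by
    by_contra h
    exact ha (finsetVec_apply_of_notMem F d h)

lemma finsetVec_sq_congr (F : Finset α) {d d' : F → ℝ} (h : ∀ i, d i ^ 2 = d' i ^ 2) (a : α) :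
    finsetVec F d a ^ 2 = finsetVec F d' a ^ 2 := by
  by_cases ha : a ∈ F
  · have h1 := finsetVec_apply_coe F d ⟨a, ha⟩
    have h2 := finsetVec_apply_coe F d' ⟨a, ha⟩
    simp only at h1 h2
    rw [h1, h2, h]
  · rw [finsetVec_apply_of_notMem F d ha, finsetVec_apply_of_notMem F d' ha]

open Classical in
/-- A single block of a single pair bounds the norm from below. -/
lemma sum_indicator_rpow_le_famNorm_rpow (hp : 2 < p) (F : Finset α) (d : F → ℝ) {PW : PWPair α}
    (hPW : PW ∈ 𝒞) {p₀ : Set α} (hp₀ : p₀ ∈ PW.1) :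
    ENNReal.ofReal (∑ i, d i ^ 2 * p₀.indicator PW.2 i ^ 2) ^ (p / 2) ≤
      famNorm p 𝒞 (finsetVec F d) ^ p := by
  have hp0 : 0 < p := by linarith
  have hle : pwNorm p PW.1 PW.2 (finsetVec F d) ≤ famNorm p 𝒞 (finsetVec F d) :=
    le_iSup₂_of_le PW hPW le_rfl
  refine le_trans ?_ (ENNReal.rpow_le_rpow hle hp0.le)
  rw [pwNorm, ← ENNReal.rpow_mul, one_div_mul_cancel hp0.ne', ENNReal.rpow_one]
  refine le_trans (ENNReal.rpow_le_rpow ?_ (by positivity)) (ENNReal.le_tsum (⟨p₀, hp₀⟩ : PW.1))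
  rw [ENNReal.ofReal_sum_of_nonneg fun _ _ => by positivity,
    tsum_subtype p₀ fun a => ENNReal.ofReal (finsetVec F d a ^ 2 * PW.2 a ^ 2)]
  calc ∑ i : F, ENNReal.ofReal (d i ^ 2 * p₀.indicator PW.2 i ^ 2)
      = ∑ i : F, p₀.indicator
          (fun a => ENNReal.ofReal (finsetVec F d a ^ 2 * PW.2 a ^ 2)) i := by
        refine Finset.sum_congr rfl fun i _ => ?_
        by_cases hi : (i : α) ∈ p₀ <;> simp [hi, finsetVec_apply_coe]
    _ = ∑ a ∈ F, p₀.indicator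
          (fun a => ENNReal.ofReal (finsetVec F d a ^ 2 * PW.2 a ^ 2)) a :=
        Finset.sum_coe_sort F _
    _ ≤ _ := ENNReal.sum_le_tsum F

variable {Ω : Type*} [MeasurableSpace Ω] {μ : Measure Ω}
  {S : (α → ℝ) → Lp ℝ (ENNReal.ofReal p) μ}

lemma map_finsetVec (hp : 2 < p) (h𝒞 : IsPWFamily 𝒞)
    (hadd : ∀ x y, famNorm p 𝒞 x < ⊤ → famNorm p 𝒞 y < ⊤ → S (x + y) = S x + S y)
    (hsmul : ∀ (r : ℝ) (x), famNorm p 𝒞 x < ⊤ → S (r • x) = r • S x)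
    (F : Finset α) (d : F → ℝ) :
    S (finsetVec F d) = ∑ i, d i • S (coordVec i.1) := by
  classical
  have hcoord : ∀ a : α, (coordVec a).support.Finite := fun a =>
    (Set.finite_singleton a).subset Set.support_indicator_subset
  have hfin : ∀ s : Finset F, (∑ i ∈ s, d i • coordVec i.1).support.Finite := by
    intro s
    induction s using Finset.induction_on with
    | empty => simp
    | insert i s hi ih =>
      rw [Finset.sum_insert hi]
      exact (((hcoord i.1).subset (Function.support_const_smul_subset _ _)).union ih).subset
        (Function.support_add _ _)
  have key : ∀ s : Finset F,
      S (∑ i ∈ s, d i • coordVec i.1) = ∑ i ∈ s, d i • S (coordVec i.1) := by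
    intro s
    induction s using Finset.induction_on with
    | empty =>
      have h := hsmul 0 0 (famNorm_lt_top_of_finite_support hp h𝒞 (by simp))
      simpa using h
    | insert i s hi ih =>
      have hi' := famNorm_lt_top_of_finite_support hp h𝒞 (hcoord i.1)
      rw [Finset.sum_insert hi, Finset.sum_insert hi, hadd _ _
        (famNorm_lt_top_of_finite_support hp h𝒞 ((hcoord i.1).subset
          (Function.support_const_smul_subset _ _)))
        (famNorm_lt_top_of_finite_support hp h𝒞 (hfin s)), ih, hsmul _ _ hi']
  exact key Finset.univ

lemma lintegral_enorm_sum_rpow_eq (hp : 2 < p) (h𝒞 : IsPWFamily 𝒞)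
    (hadd : ∀ x y, famNorm p 𝒞 x < ⊤ → famNorm p 𝒞 y < ⊤ → S (x + y) = S x + S y)
    (hsmul : ∀ (r : ℝ) (x), famNorm p 𝒞 x < ⊤ → S (r • x) = r • S x)
    (F : Finset α) (d : F → ℝ) :
    ∫⁻ s, ‖∑ i, d i * S (coordVec i.1) s‖ₑ ^ p ∂μ =
      ENNReal.ofReal ‖S (finsetVec F d)‖ ^ p := by
  have hp0 : 0 < p := by linarith
  have hae : ∀ᵐ s ∂μ, S (finsetVec F d) s = ∑ i, d i * S (coordVec i.1) s := by
    rw [map_finsetVec hp h𝒞 hadd hsmul]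
    have hsm : ∀ᵐ s ∂μ, ∀ i : F, (d i • S (coordVec i.1) : Lp ℝ (ENNReal.ofReal p) μ) s =
        d i * S (coordVec i.1) s :=
      ae_all_iff.2 fun i => Lp.coeFn_smul (d i) (S (coordVec i.1))
    filter_upwards [Lp.coeFn_finsetSum Finset.univ fun i : F => d i • S (coordVec i.1), hsm]
      with s hs hs'
    rw [hs, Finset.sum_apply]
    exact Finset.sum_congr rfl fun i _ => hs' i
  rw [Lp.norm_def, ENNReal.ofReal_toReal (Lp.eLpNorm_ne_top _),
    eLpNorm_eq_lintegral_rpow_enorm_toReal (by simpa using hp0) ENNReal.ofReal_ne_top,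
    ENNReal.toReal_ofReal hp0.le, ← ENNReal.rpow_mul, one_div_mul_cancel hp0.ne', ENNReal.rpow_one]
  refine lintegral_congr_ae ?_
  filter_upwards [hae] with s hs
  rw [hs]

/-- The images of the coordinate vectors under an embedding into `L_p` are unconditional. -/
lemma lintegral_enorm_boolSign_sum_rpow_le (hp : 2 < p) (h𝒞 : IsPWFamily 𝒞)
    (hadd : ∀ x y, famNorm p 𝒞 x < ⊤ → famNorm p 𝒞 y < ⊤ → S (x + y) = S x + S y)
    (hsmul : ∀ (r : ℝ) (x), famNorm p 𝒞 x < ⊤ → S (r • x) = r • S x)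
    {M c : ℝ} (hc : 0 < c)
    (hub : ∀ x, famNorm p 𝒞 x < ⊤ → ENNReal.ofReal ‖S x‖ ≤ ENNReal.ofReal M * famNorm p 𝒞 x)
    (hlb : ∀ x, famNorm p 𝒞 x < ⊤ → ENNReal.ofReal c * famNorm p 𝒞 x ≤ ENNReal.ofReal ‖S x‖)
    (F : Finset α) (ε : F → Bool) (d : F → ℝ) :
    ∫⁻ s, ‖∑ i, boolSign (ε i) * d i * S (coordVec i.1) s‖ₑ ^ p ∂μ ≤
      ENNReal.ofReal (M / c) ^ p * ∫⁻ s, ‖∑ i, d i * S (coordVec i.1) s‖ₑ ^ p ∂μ := by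
  have hp0 : 0 < p := by linarith
  rw [lintegral_enorm_sum_rpow_eq hp h𝒞 hadd hsmul F fun i => boolSign (ε i) * d i,
    lintegral_enorm_sum_rpow_eq hp h𝒞 hadd hsmul, ← ENNReal.mul_rpow_of_nonneg _ _ hp0.le]
  refine ENNReal.rpow_le_rpow ?_ hp0.le
  have hfin : ∀ e : F → ℝ, famNorm p 𝒞 (finsetVec F e) < ⊤ := fun e =>
    famNorm_lt_top_of_finite_support hp h𝒞 (finite_support_finsetVec F e)
  have hnorm : famNorm p 𝒞 (finsetVec F fun i => boolSign (ε i) * d i) =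
      famNorm p 𝒞 (finsetVec F d) :=
    famNorm_congr_sq (finsetVec_sq_congr F fun i => by rw [mul_pow, boolSign_sq, one_mul])
  calc ENNReal.ofReal ‖S (finsetVec F fun i => boolSign (ε i) * d i)‖
      ≤ ENNReal.ofReal M * famNorm p 𝒞 (finsetVec F d) := hnorm ▸ hub _ (hfin _)
    _ = ENNReal.ofReal (M / c) * (ENNReal.ofReal c * famNorm p 𝒞 (finsetVec F d)) := by
        rw [← mul_assoc, ← ENNReal.ofReal_mul' hc.le, div_mul_cancel₀ _ hc.ne']
    _ ≤ _ := by gcongr; exact hlb _ (hfin d)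

lemma ofReal_rpow_mul_le_lintegral_enorm_sum_rpow (hp : 2 < p) (h𝒞 : IsPWFamily 𝒞)
    (hadd : ∀ x y, famNorm p 𝒞 x < ⊤ → famNorm p 𝒞 y < ⊤ → S (x + y) = S x + S y)
    (hsmul : ∀ (r : ℝ) (x), famNorm p 𝒞 x < ⊤ → S (r • x) = r • S x) {c : ℝ}
    (hlb : ∀ x, famNorm p 𝒞 x < ⊤ → ENNReal.ofReal c * famNorm p 𝒞 x ≤ ENNReal.ofReal ‖S x‖)
    {PW : PWPair α} (hPW : PW ∈ 𝒞) {p₀ : Set α} (hp₀ : p₀ ∈ PW.1) (F : Finset α) (d : F → ℝ) :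
    ENNReal.ofReal c ^ p * ENNReal.ofReal (∑ i, d i ^ 2 * p₀.indicator PW.2 i ^ 2) ^ (p / 2) ≤
      ∫⁻ s, ‖∑ i, d i * S (coordVec i.1) s‖ₑ ^ p ∂μ := by
  have hp0 : 0 < p := by linarith
  rw [lintegral_enorm_sum_rpow_eq hp h𝒞 hadd hsmul]
  calc _ ≤ ENNReal.ofReal c ^ p * famNorm p 𝒞 (finsetVec F d) ^ p := by
        gcongr
        exact sum_indicator_rpow_le_famNorm_rpow hp F d hPW hp₀
    _ = (ENNReal.ofReal c * famNorm p 𝒞 (finsetVec F d)) ^ p :=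
        (ENNReal.mul_rpow_of_nonneg _ _ hp0.le).symm
    _ ≤ _ := ENNReal.rpow_le_rpow
        (hlb _ (famNorm_lt_top_of_finite_support hp h𝒞 (finite_support_finsetVec F d))) hp0.le

end SequenceSpace

section FiniteSupport

variable {A B : Type*}

open Classical in
lemma Finsupp.sum_support_eq_sum_sum_image {M : Type*} [AddCommMonoid M] (coef : A × B →₀ ℝ)
    (H : A × B → M) (hH : ∀ ab, coef ab = 0 → H ab = 0) :
    ∑ ab ∈ coef.support, H ab =
      ∑ i : ↥(coef.support.image Prod.fst), ∑ j : ↥(coef.support.image Prod.snd),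
        H (i.1, j.1) := by
  rw [Finset.sum_coe_sort (coef.support.image Prod.fst)
    (fun a => ∑ j : ↥(coef.support.image Prod.snd), H (a, j.1))]
  simp only [fun a => Finset.sum_coe_sort (coef.support.image Prod.snd) (fun b => H (a, b))]
  rw [← Finset.sum_product']
  refine Finset.sum_subset (fun ab hab => ?_) fun ab _ hab => hH ab (by simpa using hab)
  exact Finset.mem_product.2 ⟨Finset.mem_image_of_mem _ hab, Finset.mem_image_of_mem _ hab⟩

open Classical in
lemma Finsupp.tsum_ofReal_eq_ofReal_sum_sum_image (coef : A × B →₀ ℝ) (h : A × B → ℝ)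
    (h0 : ∀ ab, 0 ≤ h ab) (hH : ∀ ab, coef ab = 0 → h ab = 0) :
    ∑' ab, ENNReal.ofReal (h ab) =
      ENNReal.ofReal (∑ i : ↥(coef.support.image Prod.fst),
        ∑ j : ↥(coef.support.image Prod.snd), h (i.1, j.1)) := by
  rw [← Finsupp.sum_support_eq_sum_sum_image coef h hH,
    ENNReal.ofReal_sum_of_nonneg fun ab _ => h0 ab]
  exact tsum_eq_sum fun ab hab => by simp [hH ab (by simpa using hab)]

open Classical in
lemma Finsupp.tsum_subtype_ofReal_eq_ofReal_sum_sum_image (coef : A × B →₀ ℝ)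
    (r : Set (A × B)) (h : A × B → ℝ) (h0 : ∀ ab, 0 ≤ h ab) (hH : ∀ ab, coef ab = 0 → h ab = 0) :
    ∑' ab : r, ENNReal.ofReal (h ab) =
      ENNReal.ofReal (∑ i : ↥(coef.support.image Prod.fst),
        ∑ j : ↥(coef.support.image Prod.snd), r.indicator h (i.1, j.1)) := by
  rw [← Finsupp.tsum_ofReal_eq_ofReal_sum_sum_image coef (r.indicator h)
    (Set.indicator_nonneg fun ab _ => h0 ab) fun ab hab => by simp [Set.indicator_apply, hH ab hab],
    tsum_subtype r fun ab => ENNReal.ofReal (h ab)]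
  refine tsum_congr fun ab => ?_
  by_cases hab : ab ∈ r <;> simp [hab]

end FiniteSupport

lemma ofReal_div_rpow_mul_le {p : ℝ} (hp : 0 < p) {a b : ℝ} (ha : 0 ≤ a) (hb : 0 < b)
    {X I : ℝ≥0∞} (h : ENNReal.ofReal a * X ≤ ENNReal.ofReal b * I) :
    ENNReal.ofReal ((a / b) ^ (1 / p)) * X ^ (1 / p) ≤ I ^ (1 / p) := by
  have hb0 : ENNReal.ofReal b ≠ 0 := by simpa using hb
  rw [← ENNReal.ofReal_rpow_of_nonneg (by positivity) (by positivity),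
    ← ENNReal.mul_rpow_of_nonneg _ _ (by positivity)]
  refine ENNReal.rpow_le_rpow ?_ (by positivity)
  rw [← ENNReal.mul_le_mul_iff_right hb0 ENNReal.ofReal_ne_top, ← mul_assoc,
    ← ENNReal.ofReal_mul hb.le, mul_div_cancel₀ _ hb.ne']
  exact h

/-- Superadditivity of `p/2`-th powers of square functions over a disjoint family of blocks. -/
lemma tsum_lintegral_square_function_le {Ω β : Type*} [MeasurableSpace Ω] {μ : Measure Ω}
    {q : ℝ} (hq : 1 ≤ q) {R : Set (Set β)} (hR : R.PairwiseDisjoint id) (h : Ω → β → ℝ≥0∞)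
    (hmeas : ∀ r ∈ R, Measurable fun z => ∑' x : r, h z x) :
    ∑' r : R, ∫⁻ z, (∑' x : r.1, h z x) ^ q ∂μ ≤ ∫⁻ z, (∑' x, h z x) ^ q ∂μ := by
  rw [ENNReal.tsum_eq_iSup_sum]
  refine iSup_le fun J => ?_
  rw [← lintegral_finsetSum _ fun r _ => (hmeas r.1 r.2).pow_const q]
  refine lintegral_mono fun z => ?_
  calc ∑ r ∈ J, (∑' x : r.1, h z x) ^ q
      ≤ ∑' r : R, (∑' x : r.1, h z x) ^ q := ENNReal.sum_le_tsum J
    _ ≤ (∑' r : R, ∑' x : r.1, h z x) ^ q := ENNReal.tsum_rpow_le_rpow_tsum hq _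
    _ ≤ _ := ENNReal.rpow_le_rpow (tsum_tsum_le_tsum_of_pairwiseDisjoint hR (h z)) (by linarith)

/-- With `X = X(𝒞)`, `Y = X(𝒟)` (families with the envelope property)
embedded in `L_p([0,1])` by `S` and `T`, there is `C' > 0` such that for every partition
`R` of `A × B` and every choice, for each `r ∈ R`, of pairs `(P_r,(w_{r,a})) ∈ 𝒞` and
`(Q_r,(w'_{r,b})) ∈ 𝒟` with `r ⊆ p_r × q_r` for some `p_r ∈ P_r`, `q_r ∈ Q_r`, one has
`‖Σ c_{a,b} Sx_a ⊗ Ty_b‖_{L_p([0,1]²)}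
  ≥ C' (Σ_{r∈R} (Σ_{(a,b)∈r} c_{a,b}² w_{r,a}² w'_{r,b}²)^{p/2})^{1/p}`. -/
theorem statement14 {A B : Type*} [Countable A] [Countable B] (p : ℝ) (hp : 2 < p)
    [Fact (1 ≤ ENNReal.ofReal p)]
    (𝒞 : Set (PWPair A)) (𝒟 : Set (PWPair B))
    (h𝒞 : IsPWFamily 𝒞) (h𝒟 : IsPWFamily 𝒟)
    (henv𝒞 : EnvelopeProp 𝒞) (henv𝒟 : EnvelopeProp 𝒟)
    (S : (A → ℝ) → MeasureTheory.Lp ℝ (ENNReal.ofReal p)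
      (volume : Measure ↥(Set.Icc (0 : ℝ) 1)))
    (T : (B → ℝ) → MeasureTheory.Lp ℝ (ENNReal.ofReal p)
      (volume : Measure ↥(Set.Icc (0 : ℝ) 1)))
    (MS cS MT cT : ℝ) (hcS : 0 < cS) (hcT : 0 < cT)
    (hSadd : ∀ x y, famNorm p 𝒞 x < ⊤ → famNorm p 𝒞 y < ⊤ → S (x + y) = S x + S y)
    (hSsmul : ∀ (r : ℝ) (x), famNorm p 𝒞 x < ⊤ → S (r • x) = r • S x)
    (hSub : ∀ x, famNorm p 𝒞 x < ⊤ →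
      ENNReal.ofReal ‖S x‖ ≤ ENNReal.ofReal MS * famNorm p 𝒞 x)
    (hSlb : ∀ x, famNorm p 𝒞 x < ⊤ →
      ENNReal.ofReal cS * famNorm p 𝒞 x ≤ ENNReal.ofReal ‖S x‖)
    (hTadd : ∀ x y, famNorm p 𝒟 x < ⊤ → famNorm p 𝒟 y < ⊤ → T (x + y) = T x + T y)
    (hTsmul : ∀ (r : ℝ) (x), famNorm p 𝒟 x < ⊤ → T (r • x) = r • T x)
    (hTub : ∀ x, famNorm p 𝒟 x < ⊤ →
      ENNReal.ofReal ‖T x‖ ≤ ENNReal.ofReal MT * famNorm p 𝒟 x)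
    (hTlb : ∀ x, famNorm p 𝒟 x < ⊤ →
      ENNReal.ofReal cT * famNorm p 𝒟 x ≤ ENNReal.ofReal ‖T x‖) :
    ∃ C' : ℝ, 0 < C' ∧
      ∀ R : Set (Set (A × B)), IsPartition R →
        ∀ (PR : Set (A × B) → PWPair A) (QR : Set (A × B) → PWPair B),
          (∀ r ∈ R, PR r ∈ 𝒞 ∧ QR r ∈ 𝒟 ∧
            ∃ p₀ ∈ (PR r).1, ∃ q₀ ∈ (QR r).1, r ⊆ p₀ ×ˢ q₀) →
          ∀ coef : A × B →₀ ℝ,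
            ENNReal.ofReal C' *
              (∑' r : R,
                (∑' ab : r.1,
                  ENNReal.ofReal ((coef ab.1) ^ 2 *
                    ((PR r.1).2 ab.1.1) ^ 2 * ((QR r.1).2 ab.1.2) ^ 2)) ^ (p / 2)) ^ (1 / p)
            ≤ MeasureTheory.eLpNorm
                (fun st : ↥(Set.Icc (0 : ℝ) 1) × ↥(Set.Icc (0 : ℝ) 1) =>
                  ∑ ab ∈ coef.support,
                    coef ab * (S (coordVec ab.1)) st.1 * (T (coordVec ab.2)) st.2)
                (ENNReal.ofReal p) (volume.prod volume) := by
  classical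
  have hp0 : 0 < p := by linarith
  set k := khintchineConst p
  have hk : 0 < k := khintchineConst_pos hp0
  have hub' : ∀ (M : ℝ) (x y : ℝ≥0∞), x ≤ ENNReal.ofReal M * y →
      x ≤ ENNReal.ofReal (max M 1) * y := fun M x y h =>
    h.trans (mul_le_mul_left (ENNReal.ofReal_le_ofReal (le_max_left _ _)) y)
  set KS := max MS 1 / cS
  set KT := max MT 1 / cT
  have hKS : 0 < KS := by positivity
  have hKT : 0 < KT := by positivity
  refine ⟨((cS ^ p * cT ^ p) / (k ^ 2 * (KS ^ p * KT ^ p))) ^ (1 / p), by positivity, ?_⟩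
  intro R hR PR QR hPQ coef
  set f : ↥(coef.support.image Prod.fst) → ↥(Set.Icc (0 : ℝ) 1) → ℝ :=
    fun i => S (coordVec i.1) with hfdef
  set g : ↥(coef.support.image Prod.snd) → ↥(Set.Icc (0 : ℝ) 1) → ℝ :=
    fun j => T (coordVec j.1) with hgdef
  have hf : ∀ i, Measurable (f i) := fun i => (Lp.stronglyMeasurable _).measurable
  have hg : ∀ j, Measurable (g j) := fun j => (Lp.stronglyMeasurable _).measurable
  set m : A × B → ↥(Set.Icc (0 : ℝ) 1) × ↥(Set.Icc (0 : ℝ) 1) → ℝ :=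
    fun ab z => coef ab ^ 2 * S (coordVec ab.1) z.1 ^ 2 * T (coordVec ab.2) z.2 ^ 2 with hm
  have hm0 : ∀ z ab, 0 ≤ m ab z := fun z ab => by positivity
  have hmz : ∀ z ab, coef ab = 0 → m ab z = 0 := fun z ab h => by simp [hm, h]
  have block : ∀ r : R, ENNReal.ofReal (cS ^ p * cT ^ p) *
      (∑' ab : r.1, ENNReal.ofReal ((coef ab.1) ^ 2 * ((PR r.1).2 ab.1.1) ^ 2 *
        ((QR r.1).2 ab.1.2) ^ 2)) ^ (p / 2) ≤ ENNReal.ofReal (k ^ 2) *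
      ∫⁻ z, (∑' ab : r.1, ENNReal.ofReal (m ab z)) ^ (p / 2) ∂(volume.prod volume) := by
    rintro ⟨r, hr⟩
    obtain ⟨hPr, hQr, p₀, hp₀, q₀, hq₀, hsub⟩ := hPQ r hr
    have h := le_lintegral_prod_square_function hp hf hg
      (ENNReal.rpow_ne_top_of_nonneg hp0.le ENNReal.ofReal_ne_top)
      (ofReal_rpow_mul_le_lintegral_enorm_sum_rpow hp h𝒞 hSadd hSsmul hSlb hPr hp₀ _)
      (ofReal_rpow_mul_le_lintegral_enorm_sum_rpow hp h𝒟 hTadd hTsmul hTlb hQr hq₀ _)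
      (m := fun i j => r.indicator (fun ab => coef ab ^ 2) (i.1, j.1))
      fun i j => Set.indicator_nonneg (fun _ _ => sq_nonneg _) _
    rw [ENNReal.ofReal_mul (by positivity), ← ENNReal.ofReal_rpow_of_nonneg hcS.le hp0.le,
      ← ENNReal.ofReal_rpow_of_nonneg hcT.le hp0.le, ENNReal.ofReal_pow hk.le]
    rw [Finsupp.tsum_subtype_ofReal_eq_ofReal_sum_sum_image coef r
      (fun ab => coef ab ^ 2 * (PR r).2 ab.1 ^ 2 * (QR r).2 ab.2 ^ 2)
      (fun ab => by positivity) (fun ab hab => by simp [hab])]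
    simp only [fun z => Finsupp.tsum_subtype_ofReal_eq_ofReal_sum_sum_image coef r
      (fun ab => m ab z) (hm0 z) (hmz z)]
    convert h using 8 with i _ j _ z i _ j _
    · by_cases hij : (i.1, j.1) ∈ r
      · have hmem := hsub hij
        simp [hij, hmem.1, hmem.2]
      · simp [hij]
    · by_cases hij : (i.1, j.1) ∈ r <;> simp [hij, hm, hfdef, hgdef]
  have superadd := tsum_lintegral_square_function_le (μ := volume.prod volume)
    (q := p / 2) (by linarith) hR.2.1 (fun z ab => ENNReal.ofReal (m ab z)) (by
      intro r _
      simp only [fun z => Finsupp.tsum_subtype_ofReal_eq_ofReal_sum_sum_image coef r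
        (fun ab => m ab z) (hm0 z) (hmz z)]
      refine ENNReal.measurable_ofReal.comp (Finset.measurable_fun_sum _ fun i _ =>
        Finset.measurable_fun_sum _ fun j _ => ?_)
      by_cases hij : (i.1, j.1) ∈ r
      · simp only [Set.indicator_of_mem hij]
        exact (((hf i).comp measurable_fst).pow_const 2 |>.const_mul _).mul
          (((hg j).comp measurable_snd).pow_const 2)
      · simp only [Set.indicator_of_notMem hij]
        exact measurable_const)
  have square := lintegral_prod_square_function_le hp hf hg
    (ENNReal.rpow_ne_top_of_nonneg hp0.le ENNReal.ofReal_ne_top)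
    (ENNReal.rpow_ne_top_of_nonneg hp0.le ENNReal.ofReal_ne_top)
    (lintegral_enorm_boolSign_sum_rpow_le hp h𝒞 hSadd hSsmul hcS
      (fun x hx => hub' MS _ _ (hSub x hx)) hSlb _)
    (lintegral_enorm_boolSign_sum_rpow_le hp h𝒟 hTadd hTsmul hcT
      (fun x hx => hub' MT _ _ (hTub x hx)) hTlb _)
    fun i j => coef (i.1, j.1)
  rw [eLpNorm_eq_lintegral_rpow_enorm_toReal (by simpa using hp0) ENNReal.ofReal_ne_top,
    ENNReal.toReal_ofReal hp0.le]
  refine ofReal_div_rpow_mul_le hp0 (by positivity) (by positivity) ?_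
  have hfun : ∀ z : ↥(Set.Icc (0 : ℝ) 1) × ↥(Set.Icc (0 : ℝ) 1),
      ∑ ab ∈ coef.support, coef ab * S (coordVec ab.1) z.1 * T (coordVec ab.2) z.2 =
        ∑ i, ∑ j, coef (i.1, j.1) * f i z.1 * g j z.2 := fun z =>
    Finsupp.sum_support_eq_sum_sum_image coef
      (fun ab => coef ab * S (coordVec ab.1) z.1 * T (coordVec ab.2) z.2)
      fun ab hab => by simp [hab]
  simp only [hfun]
  simp only [fun z => Finsupp.tsum_ofReal_eq_ofReal_sum_sum_image coef
    (fun ab => m ab z) (hm0 z) (hmz z)] at superadd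
  rw [← ENNReal.tsum_mul_left]
  refine (ENNReal.tsum_le_tsum block).trans ?_
  rw [ENNReal.tsum_mul_left, ENNReal.ofReal_mul (by positivity), mul_assoc,
    ENNReal.ofReal_mul (by positivity), ← ENNReal.ofReal_rpow_of_nonneg hKS.le hp0.le,
    ← ENNReal.ofReal_rpow_of_nonneg hKT.le hp0.le]
  gcongr
  exact superadd.trans square
end
end

section
/- Let p > 2 and let (w_m)_{m∈ℕ} be a sequence in (0,1] with w_m → 0, and for each n ∈ ℕ let Y_n be the corresponding space on (ℕ×ℕ)^n. Then the distance from Y_n to any subspace of L_p goes to infinity with n: there is a sequence (K(n)) of positive reals with K(n) → ∞ such that for every n, every bounded linear map T : Y_n → L_p([0,1]), and every constant c > 0 with ‖Tx‖_{L_p} ≥ c‖x‖_{Y_n} for all x ∈ Y_n, one has ‖T‖/c ≥ K(n). -/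
open scoped ENNReal
open MeasureTheory Filter

noncomputable section

variable {α : Type*}

/-- The index set `(ℕ×ℕ)^n`. -/
abbrev BIdx (n : ℕ) := Fin n → ℕ × ℕ

/-- The partition `P_I` of `(ℕ×ℕ)^n` into the sets obtained by fixing the coordinates
`i_k` for `k ∈ I` and letting the others range over all of `ℕ × ℕ`. -/
def PI {n : ℕ} (I : Finset (Fin n)) : Set (Set (BIdx n)) :=
  {S | ∃ g : Fin n → ℕ × ℕ, S = {i : BIdx n | ∀ k ∈ I, i k = g k}}

/-- The weight `W_I(i) = Π_{k∉I} w_{i_k}`, where `w_{(m,l)} = w_m`. -/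
def WI (w : ℕ → ℝ) {n : ℕ} (I : Finset (Fin n)) : BIdx n → ℝ :=
  fun i => ∏ k ∈ Iᶜ, w (i k).1

/-- The family of partition–weight pairs `{(P_I, W_I) : I ⊆ {1,…,n}}` defining `Y_n`. -/
def famYn (w : ℕ → ℝ) (n : ℕ) : Set (PWPair (BIdx n)) :=
  Set.range fun I : Finset (Fin n) => (PI I, WI w I)

/-- The norm of `Y_n`:  `max_{I ⊆ {1,…,n}} ‖x‖_{P_I,W_I}`. -/
def Ynorm (p : ℝ) (w : ℕ → ℝ) (n : ℕ) (x : BIdx n → ℝ) : ℝ≥0∞ :=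
  famNorm p (famYn w n) x

/-- The two-point cotype inequality for the real line. -/
theorem two_mul_enorm_rpow_add_le {p : ℝ} (hp : 2 ≤ p) (a b : ℝ) :
    2 * (‖a‖ₑ ^ p + ‖b‖ₑ ^ p) ≤ ‖a + b‖ₑ ^ p + ‖a - b‖ₑ ^ p := by
  have hp0 : 0 ≤ p := by linarith
  have hq : 1 ≤ p / 2 := by linarith
  have key : 2 * (|a| ^ p + |b| ^ p) ≤ |a + b| ^ p + |a - b| ^ p := by
    have hpow : ∀ t : ℝ, |t| ^ p = (t ^ 2) ^ (p / 2) := fun t => by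
      rw [← sq_abs, ← Real.rpow_natCast, ← Real.rpow_mul (abs_nonneg t)]
      congr 1
      push_cast
      ring
    have h₁ : (a ^ 2) ^ (p / 2) + (b ^ 2) ^ (p / 2) ≤ (a ^ 2 + b ^ 2) ^ (p / 2) :=
      Real.add_rpow_le_rpow_add (sq_nonneg a) (sq_nonneg b) hq
    have h₂ := (convexOn_rpow hq).right (Set.mem_Ici.2 (sq_nonneg (a + b)))
      (Set.mem_Ici.2 (sq_nonneg (a - b))) (by norm_num : (0 : ℝ) ≤ 1 / 2)
      (by norm_num : (0 : ℝ) ≤ 1 / 2) (by norm_num)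
    simp only [smul_eq_mul] at h₂
    rw [show 1 / 2 * (a + b) ^ 2 + 1 / 2 * (a - b) ^ 2 = a ^ 2 + b ^ 2 by ring] at h₂
    simp only [hpow]
    linarith
  have henorm : ∀ t : ℝ, ‖t‖ₑ ^ p = ENNReal.ofReal (|t| ^ p) := fun t => by
    rw [← ofReal_norm, Real.norm_eq_abs, ENNReal.ofReal_rpow_of_nonneg (abs_nonneg t) hp0]
  simp only [henorm]
  rw [← ENNReal.ofReal_add (by positivity) (by positivity),
    ← ENNReal.ofReal_add (by positivity) (by positivity),
    show (2 : ℝ≥0∞) = ENNReal.ofReal 2 by simp, ← ENNReal.ofReal_mul (by norm_num)]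
  exact ENNReal.ofReal_le_ofReal key

section Cotype

variable {Ω : Type*} [MeasurableSpace Ω] {μ : Measure Ω} {p : ℝ}

theorem enorm_rpow_eq_lintegral (hp : 0 < p) (f : Lp ℝ (ENNReal.ofReal p) μ) :
    ‖f‖ₑ ^ p = ∫⁻ t, ‖f t‖ₑ ^ p ∂μ := by
  rw [Lp.enorm_def, eLpNorm_eq_lintegral_rpow_enorm_toReal (by simpa using hp)
    ENNReal.ofReal_ne_top, ENNReal.toReal_ofReal hp.le, ← ENNReal.rpow_mul,
    one_div_mul_cancel hp.ne', ENNReal.rpow_one]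

/-- The two-point cotype inequality in `L_p`, `p ≥ 2`. -/
theorem Lp_two_mul_enorm_rpow_add_le (hp : 2 ≤ p) (f g : Lp ℝ (ENNReal.ofReal p) μ) :
    2 * (‖f‖ₑ ^ p + ‖g‖ₑ ^ p) ≤ ‖f + g‖ₑ ^ p + ‖f - g‖ₑ ^ p := by
  have hp0 : 0 < p := by linarith
  have hmeas : ∀ h : Lp ℝ (ENNReal.ofReal p) μ, AEMeasurable (fun t => ‖h t‖ₑ ^ p) μ :=
    fun h => (Lp.aestronglyMeasurable h).enorm.pow_const p
  simp only [enorm_rpow_eq_lintegral hp0]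
  rw [← lintegral_add_left' (hmeas f), ← lintegral_add_left' (hmeas (f + g)),
    ← lintegral_const_mul' _ _ (by simp)]
  refine lintegral_mono_ae ?_
  filter_upwards [Lp.coeFn_add f g, Lp.coeFn_sub f g] with t h₁ h₂
  rw [h₁, h₂]
  exact two_mul_enorm_rpow_add_le hp (f t) (g t)

/-- `L_p` has cotype `p` with constant one for `p ≥ 2`. -/
theorem exists_signs_sum_enorm_rpow_le (hp : 2 ≤ p) [Fact (1 ≤ ENNReal.ofReal p)]
    {ι : Type*} (s : Finset ι) (f : ι → Lp ℝ (ENNReal.ofReal p) μ) :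
    ∃ ε : ι → ℝ, (∀ i, |ε i| = 1) ∧
      ∑ i ∈ s, ‖f i‖ₑ ^ p ≤ ‖∑ i ∈ s, ε i • f i‖ₑ ^ p := by
  classical
  induction s using Finset.induction_on with
  | empty => exact ⟨fun _ => 1, by simp, by simp⟩
  | insert a s ha ih =>
    obtain ⟨ε, hε, hle⟩ := ih
    have hupdate : ∀ r : ℝ, ∑ i ∈ insert a s, Function.update ε a r i • f i =
        r • f a + ∑ i ∈ s, ε i • f i := fun r => by
      rw [Finset.sum_insert ha, Function.update_self]
      congr 1
      refine Finset.sum_congr rfl fun i hi => ?_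
      rw [Function.update_of_ne (by rintro rfl; exact ha hi)]
    have hsign : ∀ r : ℝ, |r| = 1 → ∀ i, |Function.update ε a r i| = 1 := fun r hr i => by
      by_cases hi : i = a
      · subst hi; simpa using hr
      · rw [Function.update_of_ne hi]; exact hε i
    set g := ∑ i ∈ s, ε i • f i with hg
    have h := Lp_two_mul_enorm_rpow_add_le hp g (f a)
    have hor : ‖g‖ₑ ^ p + ‖f a‖ₑ ^ p ≤ ‖g + f a‖ₑ ^ p ∨
        ‖g‖ₑ ^ p + ‖f a‖ₑ ^ p ≤ ‖g - f a‖ₑ ^ p := by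
      by_contra! hcon
      refine absurd h (not_le.2 ?_)
      rw [two_mul]
      exact ENNReal.add_lt_add hcon.1 hcon.2
    rcases hor with hor | hor
    · refine ⟨Function.update ε a 1, hsign 1 (by simp), ?_⟩
      rw [hupdate, Finset.sum_insert ha, one_smul, add_comm, add_comm (f a)]
      exact (add_le_add_left hle _).trans hor
    · refine ⟨Function.update ε a (-1), hsign (-1) (by simp), ?_⟩
      rw [hupdate, Finset.sum_insert ha, neg_one_smul, add_comm, neg_add_eq_sub]
      exact (add_le_add_left hle _).trans hor

end Cotype

/-- Minkowski's inequality for sums in `[0,∞]` over an arbitrary index type. -/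
theorem tsum_rpow_add_le {ι : Type*} {p : ℝ} (hp : 1 ≤ p) (f g : ι → ℝ≥0∞) :
    (∑' i, (f i + g i) ^ p) ^ (1 / p) ≤
      (∑' i, f i ^ p) ^ (1 / p) + (∑' i, g i ^ p) ^ (1 / p) := by
  let _ : MeasurableSpace ι := ⊤
  have h := ENNReal.lintegral_Lp_add_le (μ := Measure.count) (f := f) (g := g)
    measurable_from_top.aemeasurable measurable_from_top.aemeasurable hp
  simpa only [lintegral_count, Pi.add_apply] using h

section Norm

variable {p : ℝ} {P : Set (Set α)} {W : α → ℝ}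

theorem pwNorm_add_le (hp : 2 ≤ p) (x y : α → ℝ) :
    pwNorm p P W (x + y) ≤ pwNorm p P W x + pwNorm p P W y := by
  have hroot : ∀ t : ℝ≥0∞, t ^ (p / 2) = (t ^ (1 / (2 : ℝ))) ^ p := fun t => by
    rw [← ENNReal.rpow_mul]
    congr 1
    ring
  have hsq : ∀ a b : ℝ, ENNReal.ofReal (a ^ 2 * b ^ 2) = ‖a * b‖ₑ ^ (2 : ℝ) := fun a b => by
    rw [← mul_pow, ← sq_abs, ENNReal.ofReal_pow (abs_nonneg _), ← Real.norm_eq_abs, ofReal_norm]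
    norm_cast
  unfold pwNorm
  simp only [hroot, hsq]
  refine le_trans ?_ (tsum_rpow_add_le (by linarith) _ _)
  gcongr with N
  refine le_trans ?_ (tsum_rpow_add_le (by norm_num) _ _)
  gcongr with j
  rw [Pi.add_apply, add_mul]
  exact enorm_add_le _ _

theorem pwNorm_smul_of_abs_eq_one {r : ℝ} (hr : |r| = 1) (x : α → ℝ) :
    pwNorm p P W (r • x) = pwNorm p P W x := by
  have hr2 : r ^ 2 = 1 := by rw [← sq_abs, hr, one_pow]
  simp [pwNorm, mul_pow, hr2]

theorem pwNorm_zero (hp : 0 < p) : pwNorm p P W 0 = 0 := by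
  simp [pwNorm, hp]

theorem pwNorm_sum_smul_le (hp : 2 ≤ p) {ι : Type*} (s : Finset ι) (ε : ι → ℝ)
    (hε : ∀ i, |ε i| = 1) (x : ι → α → ℝ) :
    pwNorm p P W (∑ i ∈ s, ε i • x i) ≤ ∑ i ∈ s, pwNorm p P W (x i) := by
  refine (Finset.le_sum_of_subadditive _ (pwNorm_zero (by linarith)).le (pwNorm_add_le hp) s
    _).trans_eq ?_
  simp only [pwNorm_smul_of_abs_eq_one (hε _)]

/-- The vector equal to `κ` on `E` and to zero off `E`. -/
def constOn (κ : ℝ) (E : Set α) : α → ℝ := E.indicator fun _ => κ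

theorem tsum_constOn (κ : ℝ) (E : Finset α) (N : Set α) [DecidablePred (· ∈ N)] :
    ∑' j : N, ENNReal.ofReal (constOn κ (E : Set α) j.1 ^ 2 * W j.1 ^ 2) =
      ∑ j ∈ E with j ∈ N, ENNReal.ofReal (κ ^ 2 * W j ^ 2) := by
  classical
  rw [tsum_subtype N fun j => ENNReal.ofReal (constOn κ (E : Set α) j ^ 2 * W j ^ 2),
    tsum_eq_sum (s := E), Finset.sum_filter]
  · refine Finset.sum_congr rfl fun j hj => ?_
    simp [Set.indicator_apply, constOn, hj]
  · intro j hj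
    simp [Set.indicator_apply, constOn, hj]

theorem le_pwNorm_constOn (hp : 0 < p) {κ s : ℝ} (hs : 0 ≤ s) {E : Finset α} {N : Set α}
    (hN : N ∈ P) (hE : ∀ j ∈ E, j ∈ N) (hle : ∀ j ∈ E, s ^ 2 ≤ E.card * (κ ^ 2 * W j ^ 2))
    (hne : E.Nonempty) :
    ENNReal.ofReal s ≤ pwNorm p P W (constOn κ (E : Set α)) := by
  classical
  have hsum : ENNReal.ofReal s ^ (2 : ℝ) ≤
      ∑' j : N, ENNReal.ofReal (constOn κ (E : Set α) j.1 ^ 2 * W j.1 ^ 2) := by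
    rw [tsum_constOn, Finset.filter_true_of_mem hE,
      ← ENNReal.ofReal_sum_of_nonneg fun _ _ => by positivity,
      ENNReal.ofReal_rpow_of_nonneg hs (by norm_num)]
    refine ENNReal.ofReal_le_ofReal ?_
    have hcard : (0 : ℝ) < E.card := by exact_mod_cast hne.card_pos
    have h := Finset.card_nsmul_le_sum E (fun j => κ ^ 2 * W j ^ 2) (s ^ 2 / E.card)
      fun j hj => by rw [div_le_iff₀ hcard, mul_comm]; exact hle j hj
    rw [nsmul_eq_mul, mul_div_cancel₀ _ hcard.ne'] at h
    simpa using h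
  calc ENNReal.ofReal s = ((ENNReal.ofReal s ^ (2 : ℝ)) ^ (p / 2)) ^ (1 / p) := by
        rw [← ENNReal.rpow_mul, ← ENNReal.rpow_mul,
          show 2 * (p / 2 * (1 / p)) = 1 by field_simp, ENNReal.rpow_one]
    _ ≤ _ := by
        unfold pwNorm
        gcongr
        exact (ENNReal.rpow_le_rpow hsum (by positivity)).trans
          (ENNReal.le_tsum (⟨N, hN⟩ : P))

theorem pwNorm_constOn_le_of_subset (hp : 0 < p) {κ s : ℝ} (hs : 0 ≤ s) {E : Finset α}
    (hP : P.PairwiseDisjoint id) {N : Set α} (hN : N ∈ P) (hE : ∀ j ∈ E, j ∈ N)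
    (hle : ∀ j ∈ E, E.card * (κ ^ 2 * W j ^ 2) ≤ s ^ 2) :
    pwNorm p P W (constOn κ (E : Set α)) ≤ ENNReal.ofReal s := by
  classical
  have hsum : ∑' j : N, ENNReal.ofReal (constOn κ (E : Set α) j.1 ^ 2 * W j.1 ^ 2) ≤
      ENNReal.ofReal s ^ (2 : ℝ) := by
    rw [tsum_constOn, Finset.filter_true_of_mem hE,
      ← ENNReal.ofReal_sum_of_nonneg fun _ _ => by positivity,
      ENNReal.ofReal_rpow_of_nonneg hs (by norm_num)]
    refine ENNReal.ofReal_le_ofReal ?_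
    rcases E.eq_empty_or_nonempty with rfl | hne
    · simp [sq_nonneg]
    have hcard : (0 : ℝ) < E.card := by exact_mod_cast hne.card_pos
    have h := Finset.sum_le_card_nsmul E (fun j => κ ^ 2 * W j ^ 2) (s ^ 2 / E.card)
      fun j hj => by rw [le_div_iff₀ hcard, mul_comm]; exact hle j hj
    rw [nsmul_eq_mul, mul_div_cancel₀ _ hcard.ne'] at h
    simpa using h
  unfold pwNorm
  rw [tsum_eq_single (⟨N, hN⟩ : P)]
  · calc _ ≤ ((ENNReal.ofReal s ^ (2 : ℝ)) ^ (p / 2)) ^ (1 / p) := by gcongr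
      _ = ENNReal.ofReal s := by
        rw [← ENNReal.rpow_mul, ← ENNReal.rpow_mul,
          show 2 * (p / 2 * (1 / p)) = 1 by field_simp, ENNReal.rpow_one]
  · rintro ⟨N', hN'⟩ hne
    rw [tsum_constOn, Finset.filter_false_of_mem, Finset.sum_empty, ENNReal.zero_rpow_of_pos
      (by positivity)]
    intro j hj hj'
    exact Set.disjoint_left.1 (hP hN' hN fun h => hne (Subtype.ext h)) hj' (hE j hj)

theorem pwNorm_constOn_le_of_separated (hp : 0 < p) {κ s : ℝ} (hs : 0 ≤ s) {E : Finset α}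
    (hP : P.PairwiseDisjoint id) (hE : ∀ N ∈ P, ((E : Set α) ∩ N).Subsingleton)
    (hle : ∀ j ∈ E, E.card * |κ * W j| ^ p ≤ s ^ p) :
    pwNorm p P W (constOn κ (E : Set α)) ≤ ENNReal.ofReal s := by
  classical
  have hterm : ∀ N : P,
      (∑' j : N.1, ENNReal.ofReal (constOn κ (E : Set α) j.1 ^ 2 * W j.1 ^ 2)) ^ (p / 2) =
        ∑ j ∈ E, if j ∈ N.1 then ENNReal.ofReal (|κ * W j| ^ p) else 0 := by
    rintro ⟨N, hN⟩
    have hsub : ((E.filter (· ∈ N) : Finset α) : Set α).Subsingleton := by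
      simpa [Set.inter_def] using hE N hN
    rw [tsum_constOn, ← Finset.sum_filter]
    rcases hsub.eq_empty_or_singleton with h | ⟨j, h⟩
    · rw [Finset.coe_eq_empty] at h
      rw [h]
      simp [hp]
    · rw [Finset.coe_eq_singleton] at h
      rw [h, Finset.sum_singleton, Finset.sum_singleton,
        ENNReal.ofReal_rpow_of_nonneg (by positivity) (by positivity), ← mul_pow, ← sq_abs,
        ← Real.rpow_natCast, ← Real.rpow_mul (abs_nonneg _)]
      congr 2
      push_cast
      ring
  unfold pwNorm
  simp only [hterm]
  rw [Summable.tsum_finsetSum fun _ _ => ENNReal.summable]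
  have hone : ∀ j, ∑' N : P, (if j ∈ N.1 then ENNReal.ofReal (|κ * W j| ^ p) else 0) ≤
      ENNReal.ofReal (|κ * W j| ^ p) := by
    intro j
    by_cases h : ∃ N : P, j ∈ N.1
    · obtain ⟨N, hN⟩ := h
      rw [tsum_eq_single N, if_pos hN]
      intro N' hne
      refine if_neg fun hj => ?_
      exact Set.disjoint_left.1 (hP N'.2 N.2 fun h => hne (Subtype.ext h)) hj hN
    · push Not at h
      simp [h]
  calc _ ≤ (ENNReal.ofReal s ^ p) ^ (1 / p) := by
        gcongr
        refine (Finset.sum_le_sum fun j _ => hone j).trans ?_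
        rw [← ENNReal.ofReal_sum_of_nonneg fun _ _ => by positivity,
          ENNReal.ofReal_rpow_of_nonneg hs hp.le]
        refine ENNReal.ofReal_le_ofReal ?_
        rcases E.eq_empty_or_nonempty with rfl | hne
        · simp only [Finset.sum_empty]; positivity
        have hcard : (0 : ℝ) < E.card := by exact_mod_cast hne.card_pos
        have h := Finset.sum_le_card_nsmul E (fun j => |κ * W j| ^ p) (s ^ p / E.card)
          fun j hj => by rw [le_div_iff₀ hcard, mul_comm]; exact hle j hj
        rwa [nsmul_eq_mul, mul_div_cancel₀ _ hcard.ne'] at h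
    _ = ENNReal.ofReal s := by
        rw [← ENNReal.rpow_mul, mul_one_div_cancel hp.ne', ENNReal.rpow_one]

end Norm

section Yn

variable {p : ℝ} {w : ℕ → ℝ} {n : ℕ}

theorem pairwiseDisjoint_PI (J : Finset (Fin n)) : (PI J).PairwiseDisjoint id := by
  rintro _ ⟨g, rfl⟩ _ ⟨g', rfl⟩ hne
  refine Set.disjoint_left.2 fun i hi hi' => hne ?_
  ext j
  exact forall₂_congr fun k hk => by rw [← hi k hk, ← hi' k hk]

theorem pwNorm_le_Ynorm (J : Finset (Fin n)) (x : BIdx n → ℝ) :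
    pwNorm p (PI J) (WI w J) x ≤ Ynorm p w n x :=
  le_iSup₂_of_le (PI J, WI w J) ⟨J, rfl⟩ le_rfl

theorem Ynorm_le {x : BIdx n → ℝ} {C : ℝ≥0∞}
    (h : ∀ J : Finset (Fin n), pwNorm p (PI J) (WI w J) x ≤ C) : Ynorm p w n x ≤ C := by
  refine iSup₂_le ?_
  rintro _ ⟨J, rfl⟩
  exact h J

theorem Ynorm_add_lt_top (hp : 2 ≤ p) {x y : BIdx n → ℝ} (hx : Ynorm p w n x < ⊤)
    (hy : Ynorm p w n y < ⊤) : Ynorm p w n (x + y) < ⊤ :=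
  (Ynorm_le fun J => (pwNorm_add_le hp x y).trans
    (add_le_add (pwNorm_le_Ynorm J x) (pwNorm_le_Ynorm J y))).trans_lt
    (ENNReal.add_lt_top.2 ⟨hx, hy⟩)

theorem Ynorm_smul_lt_top {r : ℝ} (hr : |r| = 1) {x : BIdx n → ℝ} (hx : Ynorm p w n x < ⊤) :
    Ynorm p w n (r • x) < ⊤ :=
  (Ynorm_le fun J => by
    rw [pwNorm_smul_of_abs_eq_one hr]
    exact pwNorm_le_Ynorm J x).trans_lt hx

theorem Ynorm_zero (hp : 0 < p) : Ynorm p w n 0 = 0 :=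
  le_antisymm (Ynorm_le fun _ => (pwNorm_zero hp).le) zero_le

/-- The index with `k`-th coordinate `(0, l)` and all other coordinates `(m, 0)`. -/
def spreadIdx (m : ℕ) (k : Fin n) (l : ℕ) : BIdx n :=
  Function.update (fun _ => (m, 0)) k (0, l)

theorem spreadIdx_injective (m : ℕ) (k : Fin n) : Function.Injective (spreadIdx m k) := by
  intro l l' h
  simpa [spreadIdx] using congrFun h k

/-- The indices `spreadIdx m k l` with `l < R`. -/
def spreadSet (m : ℕ) (k : Fin n) (R : ℕ) : Finset (BIdx n) :=
  (Finset.range R).map ⟨spreadIdx m k, spreadIdx_injective m k⟩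

theorem mem_spreadSet {m : ℕ} {k : Fin n} {R : ℕ} {j : BIdx n} :
    j ∈ spreadSet m k R ↔ ∃ l < R, spreadIdx m k l = j := by
  simp [spreadSet]

theorem card_spreadSet (m : ℕ) (k : Fin n) (R : ℕ) : (spreadSet m k R).card = R := by
  simp [spreadSet]

theorem WI_nonneg (hw : IsWeight w) (J : Finset (Fin n)) (i : BIdx n) : 0 ≤ WI w J i :=
  Finset.prod_nonneg fun _ _ => (hw _).1.le

theorem WI_le_one (hw : IsWeight w) (J : Finset (Fin n)) (i : BIdx n) : WI w J i ≤ 1 :=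
  Finset.prod_le_one (fun _ _ => (hw _).1.le) fun _ _ => (hw _).2

theorem WI_spreadIdx_compl_singleton (m : ℕ) (k : Fin n) (l : ℕ) :
    WI w {k}ᶜ (spreadIdx m k l) = w 0 := by
  simp [WI, spreadIdx]

theorem WI_spreadIdx_le (hw : IsWeight w) {m : ℕ} {k : Fin n} {l : ℕ} {J : Finset (Fin n)}
    (hk : k ∉ J) (hJ : J ≠ {k}ᶜ) : WI w J (spreadIdx m k l) ≤ w 0 * w m := by
  obtain ⟨k', hk'J, hk'⟩ : ∃ k', k' ∉ J ∧ k' ≠ k := by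
    by_contra! h
    refine hJ (Finset.ext fun a => ?_)
    simp only [Finset.mem_compl, Finset.mem_singleton]
    exact ⟨fun ha hak => hk (hak ▸ ha), fun ha => by_contra fun haJ => ha (h a haJ)⟩
  have hpair : ∏ i ∈ {k, k'}, w (spreadIdx m k l i).1 = w 0 * w m := by
    rw [Finset.prod_pair hk'.symm]
    simp [spreadIdx, Function.update_of_ne hk']
  rw [← hpair]
  refine Finset.prod_le_prod_of_subset_of_le_one ?_ (fun _ _ => (hw _).1.le)
    fun _ _ _ => (hw _).2
  intro i hi
  rcases Finset.mem_insert.1 hi with rfl | hi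
  · simpa using hk
  · rw [Finset.mem_singleton.1 hi]; simpa using hk'J

theorem one_le_Ynorm_constOn_spreadSet (hp : 0 < p) {κ : ℝ} {R : ℕ} (hR : 0 < R)
    (hκ : R * (κ ^ 2 * w 0 ^ 2) = 1) (m : ℕ) (k : Fin n) :
    1 ≤ Ynorm p w n (constOn κ (spreadSet m k R : Set (BIdx n))) := by
  rw [← ENNReal.ofReal_one]
  refine le_trans (le_pwNorm_constOn (P := PI {k}ᶜ) hp zero_le_one
    (N := {i | ∀ a ∈ ({k}ᶜ : Finset (Fin n)), i a = spreadIdx m k 0 a}) ⟨_, rfl⟩ ?_ ?_ ?_) (pwNorm_le_Ynorm {k}ᶜ _)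
  · intro j hj a ha
    obtain ⟨l, -, rfl⟩ := mem_spreadSet.1 hj
    have hak : a ≠ k := by simpa using ha
    simp [spreadIdx, Function.update_of_ne hak]
  · intro j hj
    obtain ⟨l, -, rfl⟩ := mem_spreadSet.1 hj
    rw [card_spreadSet, WI_spreadIdx_compl_singleton, hκ, one_pow]
  · exact Finset.card_pos.1 (by rwa [card_spreadSet])

theorem pwNorm_constOn_spreadSet_le (hp : 0 < p) (hw : IsWeight w) {κ δ : ℝ} (hκ0 : 0 ≤ κ)
    (hδ : 0 ≤ δ) {R m : ℕ} (hκ : R * (κ ^ 2 * w 0 ^ 2) = 1) (hκδ : R * κ ^ p ≤ δ ^ p)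
    (hm : w m ≤ δ) (k : Fin n) (J : Finset (Fin n)) :
    pwNorm p (PI J) (WI w J) (constOn κ (spreadSet m k R : Set (BIdx n))) ≤
      if J = {k}ᶜ then 1 else ENNReal.ofReal δ := by
  have hw0 : 0 < w 0 := (hw 0).1
  by_cases hk : k ∈ J
  · rw [if_neg (by rintro rfl; simp at hk)]
    refine pwNorm_constOn_le_of_separated hp hδ (pairwiseDisjoint_PI J) ?_ ?_
    · rintro _ ⟨g, rfl⟩ i ⟨hi, hig⟩ j ⟨hj, hjg⟩
      obtain ⟨l, -, rfl⟩ := mem_spreadSet.1 (Finset.mem_coe.1 hi)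
      obtain ⟨l', -, rfl⟩ := mem_spreadSet.1 (Finset.mem_coe.1 hj)
      have h := (hig k hk).trans (hjg k hk).symm
      simp only [spreadIdx, Function.update_self, Prod.mk.injEq, true_and] at h
      rw [h]
    · intro j _
      rw [card_spreadSet]
      refine le_trans ?_ hκδ
      have hW := WI_nonneg hw J j
      rw [abs_of_nonneg (mul_nonneg hκ0 hW)]
      gcongr
      exact mul_le_of_le_one_right hκ0 (WI_le_one hw J j)
  · have hbound : ∀ t : ℝ, 0 ≤ t → (∀ l, WI w J (spreadIdx m k l) ≤ w 0 * t) →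
        pwNorm p (PI J) (WI w J) (constOn κ (spreadSet m k R : Set (BIdx n))) ≤
          ENNReal.ofReal t := by
      intro t ht hWt
      refine pwNorm_constOn_le_of_subset hp ht (pairwiseDisjoint_PI J)
        (N := {i | ∀ a ∈ J, i a = spreadIdx m k 0 a}) ⟨_, rfl⟩ ?_ ?_
      · intro j hj a ha
        obtain ⟨l, -, rfl⟩ := mem_spreadSet.1 hj
        have hak : a ≠ k := by rintro rfl; exact hk ha
        simp [spreadIdx, Function.update_of_ne hak]
      · intro j hj
        obtain ⟨l, -, rfl⟩ := mem_spreadSet.1 hj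
        rw [card_spreadSet]
        calc (R : ℝ) * (κ ^ 2 * WI w J (spreadIdx m k l) ^ 2)
            ≤ R * (κ ^ 2 * (w 0 * t) ^ 2) := by
              gcongr
              exacts [WI_nonneg hw _ _, hWt l]
          _ = R * (κ ^ 2 * w 0 ^ 2) * t ^ 2 := by ring
          _ = t ^ 2 := by rw [hκ, one_mul]
    split_ifs with hJ
    · rw [← ENNReal.ofReal_one]
      refine hbound 1 zero_le_one fun l => ?_
      rw [hJ, WI_spreadIdx_compl_singleton, mul_one]
    · refine hbound δ hδ fun l => (WI_spreadIdx_le hw hk hJ).trans ?_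
      gcongr

theorem exists_spread_parameters (hp : 2 < p) {v δ : ℝ} (hv : 0 < v) (hδ : 0 < δ) :
    ∃ (R : ℕ) (κ : ℝ), 0 < R ∧ 0 ≤ κ ∧ R * (κ ^ 2 * v ^ 2) = 1 ∧ R * κ ^ p ≤ δ ^ p := by
  have hlim : Tendsto (fun R : ℕ => (R : ℝ) ^ (-(p / 2 - 1)) * (1 / v) ^ p) atTop (nhds 0) := by
    simpa using ((tendsto_rpow_neg_atTop (by linarith : 0 < p / 2 - 1)).comp
      tendsto_natCast_atTop_atTop).mul_const ((1 / v) ^ p)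
  obtain ⟨R, hR, hR0⟩ := ((hlim.eventually_le_const (Real.rpow_pos_of_pos hδ p)).and
    (eventually_gt_atTop 0)).exists
  have hR' : (0 : ℝ) < R := by exact_mod_cast hR0
  refine ⟨R, (R : ℝ) ^ (-(1 / 2) : ℝ) * (1 / v), hR0, by positivity, ?_, ?_⟩
  · have hsq : ((R : ℝ) ^ (-(1 / 2) : ℝ)) ^ 2 = (R : ℝ)⁻¹ := by
      rw [← Real.rpow_natCast, ← Real.rpow_mul hR'.le, ← Real.rpow_neg_one]
      norm_num
    rw [mul_pow, hsq]
    field_simp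
  · refine le_of_eq_of_le ?_ hR
    rw [Real.mul_rpow (by positivity) (by positivity), ← Real.rpow_mul hR'.le, ← mul_assoc,
      ← Real.rpow_one_add' hR'.le (by linarith)]
    congr 2
    ring

/-- `Y_n` contains `ℓ_∞` of dimension `n` uniformly. -/
theorem exists_family_Ynorm_sum_le (hp : 2 < p) (hw : IsWeight w)
    (hw0 : Tendsto w atTop (nhds 0)) (n : ℕ) :
    ∃ x : Fin n → BIdx n → ℝ, (∀ k, 1 ≤ Ynorm p w n (x k)) ∧
      (∀ k, Ynorm p w n (x k) < ⊤) ∧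
      ∀ ε : Fin n → ℝ, (∀ k, |ε k| = 1) → Ynorm p w n (∑ k, ε k • x k) ≤ 2 := by
  have hp0 : 0 < p := by linarith
  set δ : ℝ := 1 / (n + 1) with hδdef
  have hδ : 0 < δ := by positivity
  have hnδ : n * δ ≤ 1 := by
    rw [hδdef, mul_one_div, div_le_one (by positivity)]
    linarith
  obtain ⟨m, hm⟩ := (hw0.eventually_le_const hδ).exists
  obtain ⟨R, κ, hR, hκ0, hκ, hκδ⟩ := exists_spread_parameters hp (hw 0).1 hδ
  have hle := fun k J =>
    pwNorm_constOn_spreadSet_le (n := n) hp0 hw hκ0 hδ.le hκ hκδ hm k J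
  refine ⟨fun k => constOn κ (spreadSet m k R : Set (BIdx n)),
    one_le_Ynorm_constOn_spreadSet hp0 hR hκ m, fun k => ?_, fun ε hε => Ynorm_le fun J => ?_⟩
  · refine (Ynorm_le (C := 1 + ENNReal.ofReal δ) fun J => (hle k J).trans ?_).trans_lt (by simp)
    split_ifs
    · exact le_self_add
    · exact le_add_self
  · refine (pwNorm_sum_smul_le hp.le _ ε hε _).trans ?_
    calc _ ≤ ∑ k : Fin n, ((if J = {k}ᶜ then 1 else 0) + ENNReal.ofReal δ) := by
          refine Finset.sum_le_sum fun k _ => (hle k J).trans ?_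
          split_ifs
          · exact le_self_add
          · exact le_add_self
      _ ≤ 1 + 1 := by
          rw [Finset.sum_add_distrib]
          refine add_le_add ?_ ?_
          · rw [← Finset.sum_filter, Finset.sum_const, nsmul_eq_mul, mul_one]
            have hcard : (Finset.univ.filter fun k : Fin n => J = {k}ᶜ).card ≤ 1 := by
              refine Finset.card_le_one.2 fun a ha b hb => ?_
              have h := (Finset.mem_filter.1 ha).2.symm.trans (Finset.mem_filter.1 hb).2
              simpa using h
            exact_mod_cast hcard
          · rw [Finset.sum_const, Finset.card_univ, Fintype.card_fin, nsmul_eq_mul,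
              ← ENNReal.ofReal_natCast, ← ENNReal.ofReal_mul (by positivity),
              ← ENNReal.ofReal_one]
            exact ENNReal.ofReal_le_ofReal hnδ
      _ = 2 := by norm_num

theorem exists_one_le_Ynorm_le_two (hp : 0 < p) :
    ∃ x : BIdx 0 → ℝ, 1 ≤ Ynorm p w 0 x ∧ Ynorm p w 0 x ≤ 2 := by
  refine ⟨constOn 1 (({default} : Finset (BIdx 0)) : Set (BIdx 0)), ?_, Ynorm_le fun J => ?_⟩
  · rw [← ENNReal.ofReal_one]
    refine le_trans (le_pwNorm_constOn (P := PI ∅) hp zero_le_one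
      (N := {i | ∀ a ∈ (∅ : Finset (Fin 0)), i a = (0, 0)}) ⟨fun _ => (0, 0), rfl⟩ (by simp) (by simp [WI]) (by simp))
      (pwNorm_le_Ynorm ∅ _)
  · refine (pwNorm_constOn_le_of_subset hp zero_le_one (pairwiseDisjoint_PI J)
      (N := {i | ∀ a ∈ J, i a = (0, 0)}) ⟨fun _ => (0, 0), rfl⟩
      (fun _ _ a => a.elim0) (by simp [WI, Finset.eq_empty_of_isEmpty])).trans ?_
    rw [ENNReal.ofReal_one]
    exact one_le_two

theorem map_sum_smul {V : Type*} [AddCommGroup V] [Module ℝ V] (hp : 2 ≤ p)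
    {T : (BIdx n → ℝ) → V}
    (hadd : ∀ x y, Ynorm p w n x < ⊤ → Ynorm p w n y < ⊤ → T (x + y) = T x + T y)
    (hsmul : ∀ (r : ℝ) (x), Ynorm p w n x < ⊤ → T (r • x) = r • T x)
    {ι : Type*} (s : Finset ι) {x : ι → BIdx n → ℝ} (hx : ∀ i, Ynorm p w n (x i) < ⊤)
    {ε : ι → ℝ} (hε : ∀ i, |ε i| = 1) :
    Ynorm p w n (∑ i ∈ s, ε i • x i) < ⊤ ∧
      T (∑ i ∈ s, ε i • x i) = ∑ i ∈ s, ε i • T (x i) := by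
  classical
  have hzero : Ynorm p w n 0 < ⊤ := by rw [Ynorm_zero (by linarith)]; exact ENNReal.zero_lt_top
  induction s using Finset.induction_on with
  | empty =>
    refine ⟨by simpa using hzero, ?_⟩
    simpa using hsmul 0 0 hzero
  | insert a s ha ih =>
    have hεa := Ynorm_smul_lt_top (hε a) (hx a)
    rw [Finset.sum_insert ha, Finset.sum_insert ha]
    exact ⟨Ynorm_add_lt_top hp hεa ih.1, by rw [hadd _ _ hεa ih.1, hsmul _ _ (hx a), ih.2]⟩

/-- A uniform copy of `ℓ_∞` of dimension `card ι` in `Y_n` forces a lower bound on the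
distortion of any embedding of `Y_n` into `L_p`. -/
theorem card_rpow_div_two_le {Ω : Type*} [MeasurableSpace Ω] {μ : Measure Ω} (hp : 2 ≤ p)
    [Fact (1 ≤ ENNReal.ofReal p)] {T : (BIdx n → ℝ) → Lp ℝ (ENNReal.ofReal p) μ} {M c : ℝ}
    (hc : 0 < c)
    (hadd : ∀ x y, Ynorm p w n x < ⊤ → Ynorm p w n y < ⊤ → T (x + y) = T x + T y)
    (hsmul : ∀ (r : ℝ) (x), Ynorm p w n x < ⊤ → T (r • x) = r • T x)
    (hM : ∀ x, Ynorm p w n x < ⊤ → ENNReal.ofReal ‖T x‖ ≤ ENNReal.ofReal M * Ynorm p w n x)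
    (hcT : ∀ x, Ynorm p w n x < ⊤ → ENNReal.ofReal c * Ynorm p w n x ≤ ENNReal.ofReal ‖T x‖)
    {ι : Type*} [Fintype ι] [Nonempty ι] {x : ι → BIdx n → ℝ}
    (hx1 : ∀ i, 1 ≤ Ynorm p w n (x i)) (hx : ∀ i, Ynorm p w n (x i) < ⊤)
    (hx2 : ∀ ε : ι → ℝ, (∀ i, |ε i| = 1) → Ynorm p w n (∑ i, ε i • x i) ≤ 2) :
    (Fintype.card ι : ℝ) ^ (1 / p) / 2 ≤ M / c := by
  have hp0 : 0 < p := by linarith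
  obtain ⟨ε, hε, hle⟩ := exists_signs_sum_enorm_rpow_le hp Finset.univ fun i => T (x i)
  obtain ⟨hfin, hT⟩ := map_sum_smul hp hadd hsmul Finset.univ hx hε
  have hlow : (Fintype.card ι : ℝ≥0∞) * ENNReal.ofReal c ^ p ≤ ∑ i, ‖T (x i)‖ₑ ^ p := by
    rw [← nsmul_eq_mul, ← Finset.card_univ]
    refine Finset.card_nsmul_le_sum _ _ _ fun i _ => ?_
    gcongr
    rw [← ofReal_norm]
    exact (le_mul_of_one_le_right zero_le (hx1 i)).trans (hcT _ (hx i))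
  have hupp : ‖∑ i, ε i • T (x i)‖ₑ ≤ ENNReal.ofReal M * 2 := by
    rw [← hT, ← ofReal_norm]
    exact (hM _ hfin).trans (by gcongr; exact hx2 ε hε)
  have hmain : (Fintype.card ι : ℝ≥0∞) * ENNReal.ofReal c ^ p ≤ (ENNReal.ofReal M * 2) ^ p :=
    hlow.trans (hle.trans (by gcongr))
  have hroot : (Fintype.card ι : ℝ≥0∞) ^ (1 / p) * ENNReal.ofReal c ≤ ENNReal.ofReal M * 2 := by
    have h := ENNReal.rpow_le_rpow hmain (by positivity : 0 ≤ 1 / p)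
    rwa [ENNReal.mul_rpow_of_nonneg _ _ (by positivity), ← ENNReal.rpow_mul,
      ← ENNReal.rpow_mul, mul_one_div_cancel hp0.ne', ENNReal.rpow_one, ENNReal.rpow_one] at h
  rw [← ENNReal.ofReal_natCast, ENNReal.ofReal_rpow_of_nonneg (by positivity) (by positivity),
    ← ENNReal.ofReal_mul (by positivity), ← ENNReal.ofReal_ofNat,
    ← ENNReal.ofReal_mul' (by norm_num)] at hroot
  have hpos : 0 < (Fintype.card ι : ℝ) ^ (1 / p) * c := by
    have : 0 < Fintype.card ι := Fintype.card_pos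
    positivity
  have hreal := (ENNReal.ofReal_le_ofReal_iff' .. ).1 hroot
  rw [div_le_div_iff₀ two_pos hc]
  exact hreal.resolve_right (not_le.2 hpos)

end Yn

/-- The distance from `Y_n` to any subspace of `L_p` goes to infinity
with `n`: there are positive reals `K n → ∞` such that whenever `T : Y_n → L_p([0,1])`
is linear, bounded by `M`, and bounded below by `c > 0`, one has `M / c ≥ K n`. -/
theorem statement18 (p : ℝ) (hp : 2 < p) [Fact (1 ≤ ENNReal.ofReal p)]
    (w : ℕ → ℝ) (hw : IsWeight w)
    (hw0 : Filter.Tendsto w Filter.atTop (nhds 0)) :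
    ∃ K : ℕ → ℝ, (∀ n, 0 < K n) ∧ Filter.Tendsto K Filter.atTop Filter.atTop ∧
      ∀ (n : ℕ)
        (T : (BIdx n → ℝ) → MeasureTheory.Lp ℝ (ENNReal.ofReal p)
          (volume : Measure ↥(Set.Icc (0 : ℝ) 1)))
        (M c : ℝ), 0 < c →
        (∀ x y, Ynorm p w n x < ⊤ → Ynorm p w n y < ⊤ → T (x + y) = T x + T y) →
        (∀ (r : ℝ) (x), Ynorm p w n x < ⊤ → T (r • x) = r • T x) →
        (∀ x, Ynorm p w n x < ⊤ →
          ENNReal.ofReal ‖T x‖ ≤ ENNReal.ofReal M * Ynorm p w n x) →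
        (∀ x, Ynorm p w n x < ⊤ →
          ENNReal.ofReal c * Ynorm p w n x ≤ ENNReal.ofReal ‖T x‖) →
        K n ≤ M / c := by
  have hp0 : 0 < p := by linarith
  refine ⟨fun n => ((max n 1 : ℕ) : ℝ) ^ (1 / p) / 2, fun n => by positivity, ?_, ?_⟩
  · refine Tendsto.atTop_div_const two_pos ((tendsto_rpow_atTop (by positivity)).comp
      (tendsto_natCast_atTop_atTop.comp ?_))
    exact tendsto_atTop_mono (fun n => le_max_left n 1) tendsto_id
  · intro n T M c hc hadd hsmul hM hcT
    rcases n.eq_zero_or_pos with rfl | hn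
    · obtain ⟨x, hx1, hx2⟩ := exists_one_le_Ynorm_le_two (w := w) hp0
      have h := card_rpow_div_two_le (ι := Unit) hp.le hc hadd hsmul hM hcT (x := fun _ => x)
        (fun _ => hx1) (fun _ => hx2.trans_lt (by simp)) fun ε hε => Ynorm_le fun J =>
          (pwNorm_sum_smul_le hp.le _ ε hε _).trans
            (by simpa using (pwNorm_le_Ynorm J x).trans hx2)
      simpa using h
    · obtain ⟨x, hx1, hx, hx2⟩ := exists_family_Ynorm_sum_le hp hw hw0 n
      have : Nonempty (Fin n) := ⟨⟨0, hn⟩⟩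
      have h := card_rpow_div_two_le hp.le hc hadd hsmul hM hcT hx1 hx hx2
      rw [Fintype.card_fin] at h
      simpa only [max_eq_left (Nat.succ_le_of_lt hn)] using h
end
end
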